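/- Let m = 2. Fix integers w ≥ 3 and d ≥ 4w−1. Take distinct lines L_1, L_2 ⊂ ℙ^2 and set {O} := L_1 ∩ L_2. Let A_1 ⊂ L_1 be the degree-w effective divisor of L_1 supported at O. Fix O_2 ∈ L_2 ∖ {O} and let A_2 ⊂ L_2 be the degree-w effective divisor of L_2 supported at O_2. Set A := A_1 ∪ A_2. Then for every P ∈ ⟨ν_d(A)⟩ with P ∉ ⟨ν_d(A')⟩ for any A' ⊊ A, one has br(P) = 2w and sr(P) ≥ 2d+3−2w; moreover, there exists such a P with sr(P) = 2d+3−2w. -/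

import Mathlib

open scoped LinearAlgebra.Projectivization

noncomputable section

/-- The polynomial ring in `m+1` variables over `K`: homogeneous coordinate ring of `ℙ^m`. -/
abbrev PR (K : Type) [Field K] (m : ℕ) : Type := MvPolynomial (Fin (m+1)) K

/-- The space of degree-`d` forms in `m+1` variables. -/
abbrev Hd (K : Type) [Field K] (m d : ℕ) : Submodule K (PR K m) :=
  MvPolynomial.homogeneousSubmodule (Fin (m+1)) K d

/-- Projective `m`-space over `K`. -/
abbrev Pm (K : Type) [Field K] (m : ℕ) := ℙ K (Fin (m+1) → K)

/-- The target projective space `ℙ^n`, `n = C(m+d,m) - 1`, of the degree-`d` Veronese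
embedding, realized as the projectivization of the dual of the space of degree-`d` forms
(the space of degree-`d` symmetric tensors). -/
abbrev PN (K : Type) [Field K] (m d : ℕ) := ℙ K (Module.Dual K (Hd K m d))

variable {K : Type} [Field K] {m : ℕ}

/-- Hilbert function of `R/I` in degree `t`. -/
def hilbQ (I : Ideal (PR K m)) (t : ℕ) : ℕ :=
  Module.finrank K ((Hd K m t).map (Ideal.Quotient.mkₐ K I).toLinearMap)

/-- The degree (length) of the projective scheme defined by `I`: the eventual value of the
Hilbert function of `R/I`. -/
def idealDeg (I : Ideal (PR K m)) : ℕ := Filter.limsup (fun t => hilbQ I t) Filter.atTop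

/-- `h^1(𝓘_Z(d))` for the zero-dimensional scheme `Z` with (saturated) ideal `I`:
it equals `deg Z - dim (R/I)_d`. -/
def h1I (I : Ideal (PR K m)) (d : ℕ) : ℕ := idealDeg I - hilbQ I d

/-- An ideal is homogeneous. -/
def IsHomogI (I : Ideal (PR K m)) : Prop :=
  ∀ f ∈ I, ∀ n : ℕ, MvPolynomial.homogeneousComponent n f ∈ I

/-- An ideal is saturated with respect to the irrelevant maximal ideal. -/
def IsSatI (I : Ideal (PR K m)) : Prop :=
  ∀ f : PR K m, (∀ i, MvPolynomial.X i * f ∈ I) → f ∈ I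

/-- A closed subscheme of `ℙ^m`, given by its saturated homogeneous ideal. -/
structure PSub (K : Type) [Field K] (m : ℕ) where
  I : Ideal (PR K m)
  homog : IsHomogI I
  sat : IsSatI I

/-- A (closed sub)scheme is zero-dimensional iff the Hilbert function of `R/I` is bounded. -/
def IsZeroDimI (I : Ideal (PR K m)) : Prop := ∃ C, ∀ t, hilbQ I t ≤ C

/-- A polynomial vanishes at a projective point (every homogeneous component vanishes
at a representative). -/
def vanishesAt (f : PR K m) (a : Pm K m) : Prop :=
  ∀ n : ℕ, MvPolynomial.eval a.rep (MvPolynomial.homogeneousComponent n f) = 0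

/-- Zero locus of an ideal in `ℙ^m`. -/
def pzeroLocus (I : Ideal (PR K m)) : Set (Pm K m) := {a | ∀ f ∈ I, vanishesAt f a}

/-- The (saturated) homogeneous ideal of a set of points of `ℙ^m`. -/
def idealOfSet (S : Set (Pm K m)) : Ideal (PR K m) :=
  Ideal.span {f : PR K m | (∃ n, f.IsHomogeneous n) ∧ ∀ a ∈ S, MvPolynomial.eval a.rep f = 0}

/-- Saturation of a homogeneous ideal: the smallest saturated homogeneous ideal containing it. -/
def satIdeal (J : Ideal (PR K m)) : Ideal (PR K m) := sInf {J' | J ≤ J' ∧ IsHomogI J' ∧ IsSatI J'}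

/-- The scheme defined by the (saturated) ideal `I` is reduced. -/
def IsReducedI (I : Ideal (PR K m)) : Prop := I = idealOfSet (pzeroLocus I)

/-- Connected component of a zero-dimensional scheme at a point `a`: the largest subscheme
supported at `a`, i.e. the `a`-primary component. -/
def componentAt (I : Ideal (PR K m)) (a : Pm K m) : Ideal (PR K m) :=
  sInf {J | I ≤ J ∧ IsHomogI J ∧ IsSatI J ∧ pzeroLocus J ⊆ {a}}

/-- Residual scheme of `Z` with respect to the hypersurface `f = 0`: the colon ideal `(I_Z : f)`. -/
def resIdeal (I : Ideal (PR K m)) (f : PR K m) : Ideal (PR K m) :=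
  Submodule.colon I (Ideal.span {f})

/-- Degree of the scheme-theoretic intersection of the subschemes defined by `I` and `J`. -/
def interDeg (I J : Ideal (PR K m)) : ℕ := idealDeg (I ⊔ J)

/-- The degree-`d` Veronese image of a vector `v`: the evaluation-at-`v` functional on
degree-`d` forms. -/
def nu (d : ℕ) (v : Fin (m+1) → K) : Module.Dual K (Hd K m d) :=
  (MvPolynomial.aeval v).toLinearMap ∘ₗ (Hd K m d).subtype

/-- The linear span of the Veronese image `ν_d(S)` of a set `S` of points of `ℙ^m`. -/
def dualSpan (d : ℕ) (S : Set (Pm K m)) : Submodule K (Module.Dual K (Hd K m d)) :=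
  Submodule.span K ((fun a => nu d a.rep) '' S)

/-- The linear span `⟨ν_d(Z)⟩` of the Veronese image of the subscheme with ideal `I`:
the annihilator of the degree-`d` part of `I`. -/
def schemeSpanSub (I : Ideal (PR K m)) (d : ℕ) : Submodule K (Module.Dual K (Hd K m d)) where
  carrier := {φ | ∀ f : Hd K m d, (f : PR K m) ∈ I → φ f = 0}
  add_mem' := by
    intro a b ha hb f hf
    simp [LinearMap.add_apply, ha f hf, hb f hf]
  zero_mem' := by intro f hf; simp
  smul_mem' := by
    intro c a ha f hf
    simp [LinearMap.smul_apply, ha f hf]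

/-- `P ∈ ⟨ν_d(Z)⟩`, for `Z` the subscheme with ideal `I`. -/
def inSpanI (I : Ideal (PR K m)) (d : ℕ) (P : PN K m d) : Prop := P.rep ∈ schemeSpanSub I d

/-- `P ∈ ⟨ν_d(S)⟩` for a set `S` of points of `ℙ^m`. -/
def inSpanSet (d : ℕ) (S : Set (Pm K m)) (P : PN K m d) : Prop := P.rep ∈ dualSpan d S

/-- `L` is a linear subspace of `ℙ^m`. -/
def IsLinearSub (L : Set (Pm K m)) : Prop :=
  ∃ W : Submodule K (Fin (m+1) → K), L = {a | a.submodule ≤ W}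

/-- `L` is a line of `ℙ^m`. -/
def IsLine (L : Set (Pm K m)) : Prop :=
  ∃ W : Submodule K (Fin (m+1) → K), Module.finrank K W = 2 ∧ L = {a | a.submodule ≤ W}

/-- `L` is a plane of `ℙ^m`. -/
def IsPlane (L : Set (Pm K m)) : Prop :=
  ∃ W : Submodule K (Fin (m+1) → K), Module.finrank K W = 3 ∧ L = {a | a.submodule ≤ W}

/-- `J` is the (saturated homogeneous) ideal of a conic of `ℙ^m`: a degree-2 curve contained
in a plane (possibly reducible). -/
def IsConic (J : Ideal (PR K m)) : Prop :=
  ∃ (W : Submodule K (Fin (m+1) → K)) (q : PR K m),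
    Module.finrank K W = 3 ∧ q.IsHomogeneous 2 ∧
    q ∉ idealOfSet {a : Pm K m | a.submodule ≤ W} ∧
    J = satIdeal (idealOfSet {a : Pm K m | a.submodule ≤ W} ⊔ Ideal.span {q})

/-- The algebra of polynomial functions on a `K`-vector space. -/
def polyFunctions (K V : Type) [Field K] [AddCommGroup V] [Module K V] : Subalgebra K (V → K) :=
  Algebra.adjoin K {g : V → K | ∃ φ : V →ₗ[K] K, g = ⇑φ}

/-- Zariski closure of a subset of a projective space. -/
def zClosure {V : Type} [AddCommGroup V] [Module K V] (T : Set (ℙ K V)) : Set (ℙ K V) :=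
  {P | ∀ F ∈ polyFunctions K V, (∀ Q ∈ T, ∀ c : K, F (c • Q.rep) = 0) →
    ∀ c : K, F (c • P.rep) = 0}

/-- The Veronese variety `X_{m,d} = ν_d(ℙ^m)` as a subset of `PN K m d`. -/
def XSet (K : Type) [Field K] (m d : ℕ) : Set (PN K m d) :=
  {Q | ∃ a : Pm K m, Q.submodule = Submodule.span K {nu d a.rep}}

/-- The image `ν_d(S)` of a set of points of `ℙ^m`, as a subset of `PN K m d`. -/
def nuSet (d : ℕ) (S : Set (Pm K m)) : Set (PN K m d) :=
  {Q | ∃ a ∈ S, Q.submodule = Submodule.span K {nu d a.rep}}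

/-- The rank of a point `P` of `PN` with respect to a subset `Y ⊆ PN`. -/
def rankWrt {m d : ℕ} (Y : Set (PN K m d)) (P : PN K m d) : ℕ :=
  sInf {r | ∃ S : Finset (PN K m d), ↑S ⊆ Y ∧ S.card = r ∧
    P.rep ∈ Submodule.span K (Projectivization.rep '' (S : Set (PN K m d)))}

/-- The `s`-th secant variety of `Y ⊆ PN`: the Zariski closure of the union of the spans
of `s` points of `Y`. -/
def secantWrt {m d : ℕ} (Y : Set (PN K m d)) (s : ℕ) : Set (PN K m d) :=
  zClosure {Q | ∃ S : Finset (PN K m d), ↑S ⊆ Y ∧ S.card ≤ s ∧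
    Q.rep ∈ Submodule.span K (Projectivization.rep '' (S : Set (PN K m d)))}

/-- The border rank of `P` with respect to `Y ⊆ PN`. -/
def brankWrt {m d : ℕ} (Y : Set (PN K m d)) (P : PN K m d) : ℕ :=
  sInf {s | 0 < s ∧ P ∈ secantWrt Y s}

/-- Symmetric rank. -/
def srank {m : ℕ} (d : ℕ) (P : PN K m d) : ℕ := rankWrt (XSet K m d) P

/-- Border rank. -/
def brank {m : ℕ} (d : ℕ) (P : PN K m d) : ℕ := brankWrt (XSet K m d) P

/-- Cactus rank: minimal degree of a zero-dimensional closed subscheme `E ⊂ ℙ^m` with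
`P ∈ ⟨ν_d(E)⟩`. -/
def crank {m : ℕ} (d : ℕ) (P : PN K m d) : ℕ :=
  sInf {c | ∃ Z : PSub K m, IsZeroDimI Z.I ∧ idealDeg Z.I = c ∧ inSpanI Z.I d P}

/-- `σ_{s,r}(X_{m,d})`. -/
def sigmaSet (K : Type) [Field K] (m d s r : ℕ) : Set (PN K m d) :=
  {P | brank d P = s ∧ srank d P = r}

/-- A property `Φ` holds for a general `k`-tuple of points of the linear subspace of `ℙ^m`
determined by `W`. -/
def GenerallyOn (W : Submodule K (Fin (m+1) → K)) (k : ℕ)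
    (Φ : (Fin k → Pm K m) → Prop) : Prop :=
  ∃ w : Fin 3 → W, Submodule.span K (Set.range fun j => (w j : Fin (m+1) → K)) = W ∧
    ∃ F : MvPolynomial (Fin k × Fin 3) K, F ≠ 0 ∧
      ∀ c : Fin k → Fin 3 → K,
        MvPolynomial.eval (fun p => c p.1 p.2) F ≠ 0 →
        ∀ e : Fin k → Pm K m,
          (∀ i, (e i).submodule = Submodule.span K {∑ j, c i j • (w j : Fin (m+1) → K)}) → Φ e

end

/-! A linear change of coordinates turns `A` into the scheme with ideal
`(x₂, x₁ʷ) ∩ (x₁, x₀ʷ)`, and `P` into a functional on the forms of degree `d` that kills this ideal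
but neither of the monomials `x₀^(d+1-w) x₁^(w-1)` and `x₂^(d+1-w) x₀^(w-1)`.

Symmetric rank, lower bound: let the functional be a combination of evaluations at a finite set `T`.
If `T` lies on the two lines, counting its points on each of them suffices. Otherwise weight the
points off both lines by `x₁ x₂`; the new functional vanishes on all forms of degree `d - 2`, so
that, if `T` is small, at least `d` of its points lie on one further line. But at least `d - w`
points of `T` lie off that line, and together these are too many.

Border rank: the span of the degree-`w` divisor of a line at a point is spanned by functionals that
are limits of sums of `w` powers, whence `br(P) ≤ 2w`; conversely a catalecticant minor of size `2w`
is block triangular with nonzero diagonal entries.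

The value `2d + 3 - 2w` is attained by the sum of the coefficients at the two monomials above and at
`x₀^d`. Averaging over roots of unity writes the first coefficient as a sum of `d + 2 - w` powers,
and the other two together as a sum of `d + 1 - w` powers. -/

namespace VeroneseRank

open MvPolynomial

section Points

variable {K : Type} [Field K] {m : ℕ}

/-- The linear form `∑ aⱼ xⱼ` with coefficient vector `a`. -/
noncomputable def linForm (a : Fin (m + 1) → K) : PR K m := ∑ j, C (a j) * X j

lemma isHomogeneous_linForm (a : Fin (m + 1) → K) : (linForm a).IsHomogeneous 1 :=
  IsHomogeneous.sum _ _ _ fun _ _ => isHomogeneous_C_mul_X _ _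

lemma eval_linForm (a v : Fin (m + 1) → K) : eval v (linForm a) = a ⬝ᵥ v := by
  simp [linForm, dotProduct]

lemma exists_linForm_separating {p q : Pm K m} (h : p ≠ q) :
    ∃ a : Fin (m + 1) → K, eval q.rep (linForm a) = 0 ∧ eval p.rep (linForm a) ≠ 0 := by
  have hp : p.rep ∉ Submodule.span K {q.rep} := by
    rw [Submodule.mem_span_singleton]
    rintro ⟨t, ht⟩
    apply h
    rw [← p.mk_rep, ← q.mk_rep, Projectivization.mk_eq_mk_iff']
    exact ⟨t, ht⟩
  obtain ⟨f, hfp, hfq⟩ := Submodule.exists_le_ker_of_notMem hp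
  obtain ⟨a, rfl⟩ := (dotProductEquiv K (Fin (m + 1))).surjective f
  refine ⟨a, ?_, ?_⟩
  · simpa [eval_linForm] using hfq (Submodule.mem_span_singleton_self q.rep)
  · simpa [eval_linForm] using hfp

lemma exists_form_separating {T : Finset (Pm K m)} {p : Pm K m} (hp : p ∉ T) :
    ∃ F : PR K m, F.IsHomogeneous T.card ∧ eval p.rep F ≠ 0 ∧ ∀ a ∈ T, eval a.rep F = 0 := by
  classical
  induction T using Finset.induction_on with
  | empty => exact ⟨1, isHomogeneous_one _ K, by simp, by simp⟩
  | insert q T hqT ih =>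
    rw [Finset.mem_insert, not_or] at hp
    obtain ⟨F, hF, hFp, hFT⟩ := ih hp.2
    obtain ⟨b, hbq, hbp⟩ := exists_linForm_separating hp.1
    refine ⟨F * linForm b, ?_, ?_, fun a ha => ?_⟩
    · simpa [hqT] using hF.mul (isHomogeneous_linForm b)
    · simpa using ⟨hFp, hbp⟩
    · rcases Finset.mem_insert.mp ha with rfl | ha
      · simp [hbq]
      · simp [hFT a ha]

lemma exists_form_separating_of_card_le {T : Finset (Pm K m)} {p : Pm K m} (hp : p ∉ T) {k : ℕ}
    (hk : T.card ≤ k) :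
    ∃ F : PR K m, F.IsHomogeneous k ∧ eval p.rep F ≠ 0 ∧ ∀ a ∈ T, eval a.rep F = 0 := by
  obtain ⟨F, hF, hFp, hFT⟩ := exists_form_separating hp
  obtain ⟨j, hj⟩ := Function.ne_iff.mp p.rep_nonzero
  refine ⟨F * X j ^ (k - T.card), ?_, ?_, fun a ha => by simp [hFT a ha]⟩
  · simpa [hk] using hF.mul (isHomogeneous_X_pow (R := K) j (k - T.card))
  · simpa using ⟨hFp, fun h => absurd h hj⟩

/-- The functional `f ↦ ∑ c(a) f(a)` on polynomials, for points `a ∈ T` with weights `c`. -/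
noncomputable def pointFunctional (T : Finset (Pm K m)) (c : Pm K m → K) :
    PR K m →ₗ[K] K :=
  ∑ a ∈ T, c a • (aeval a.rep).toLinearMap

lemma pointFunctional_apply (T : Finset (Pm K m)) (c : Pm K m → K) (f : PR K m) :
    pointFunctional T c f = ∑ a ∈ T, c a * eval a.rep f := by
  simp [pointFunctional]

lemma pointFunctional_eq_of_subset {S T : Finset (Pm K m)} (hST : S ⊆ T) {c : Pm K m → K}
    (hc : ∀ a ∈ T, a ∉ S → c a = 0) : pointFunctional S c = pointFunctional T c :=
  Finset.sum_subset hST fun a haT haS => by rw [hc a haT haS, zero_smul]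

lemma pointFunctional_mul (T : Finset (Pm K m)) (c : Pm K m → K) (q f : PR K m) :
    pointFunctional T c (q * f) = pointFunctional T (fun a => c a * eval a.rep q) f := by
  simp only [pointFunctional_apply, map_mul, mul_assoc]

lemma add_two_le_card_of_pointFunctional_eq_zero {T : Finset (Pm K m)} {c : Pm K m → K} {k : ℕ}
    (hc : ∀ a ∈ T, c a ≠ 0) (hT : T.Nonempty)
    (h : ∀ f : PR K m, f.IsHomogeneous k → pointFunctional T c f = 0) : k + 2 ≤ T.card := by
  classical
  by_contra! hlt
  obtain ⟨p, hp⟩ := hT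
  obtain ⟨F, hF, hFp, hFT⟩ := exists_form_separating_of_card_le (T.notMem_erase p) (k := k) <| by
    rw [Finset.card_erase_of_mem hp]; lia
  have hsum : pointFunctional T c F = c p * eval p.rep F := by
    rw [pointFunctional_apply]
    refine Finset.sum_eq_single_of_mem p hp fun a ha hap => ?_
    rw [hFT a (Finset.mem_erase.mpr ⟨hap, ha⟩), mul_zero]
  exact mul_ne_zero (hc p hp) hFp (hsum ▸ h F hF)

end Points

section PlanePoints

variable {K : Type} [Field K]

lemma exists_linForm_eq_zero (p q : Fin 3 → K) :
    ∃ a : Fin 3 → K, a ≠ 0 ∧ a ⬝ᵥ p = 0 ∧ a ⬝ᵥ q = 0 := by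
  have hdet : (Matrix.of ![p, q, 0]).det = 0 :=
    Matrix.det_eq_zero_of_row_eq_zero 2 fun _ => by simp
  obtain ⟨a, ha, h⟩ := Matrix.exists_mulVec_eq_zero_iff.mpr hdet
  refine ⟨a, ha, ?_, ?_⟩
  · simpa [Matrix.mulVec, dotProduct_comm] using congrFun h 0
  · simpa [Matrix.mulVec, dotProduct_comm] using congrFun h 1

open scoped Classical in
/-- The points of `T` on the line with equation `a`. -/
noncomputable def onLine (T : Finset (Pm K 2)) (a : Fin 3 → K) : Finset (Pm K 2) :=
  {p ∈ T | a ⬝ᵥ p.rep = 0}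

lemma mem_onLine {T : Finset (Pm K 2)} {a : Fin 3 → K} {p : Pm K 2} :
    p ∈ onLine T a ↔ p ∈ T ∧ a ⬝ᵥ p.rep = 0 := by
  simp [onLine]

lemma onLine_subset (T : Finset (Pm K 2)) (a : Fin 3 → K) : onLine T a ⊆ T :=
  fun _ hp => (mem_onLine.mp hp).1

lemma onLine_subset_onLine {S T : Finset (Pm K 2)} (hST : S ⊆ T) (a : Fin 3 → K) :
    onLine S a ⊆ onLine T a :=
  fun _ hp => mem_onLine.mpr ⟨hST (mem_onLine.mp hp).1, (mem_onLine.mp hp).2⟩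

lemma exists_two_le_card_onLine {T : Finset (Pm K 2)} (hT : 2 ≤ T.card) :
    ∃ a : Fin 3 → K, a ≠ 0 ∧ 2 ≤ (onLine T a).card := by
  obtain ⟨p, hp, q, hq, hpq⟩ := Finset.one_lt_card.mp hT
  obtain ⟨a, ha, hap, haq⟩ := exists_linForm_eq_zero p.rep q.rep
  exact ⟨a, ha, Finset.one_lt_card.mpr
    ⟨p, mem_onLine.mpr ⟨hp, hap⟩, q, mem_onLine.mpr ⟨hq, haq⟩, hpq⟩⟩

lemma exists_max_card_onLine (T : Finset (Pm K 2)) :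
    ∃ a : Fin 3 → K, a ≠ 0 ∧ ∀ b : Fin 3 → K, b ≠ 0 → (onLine T b).card ≤ (onLine T a).card := by
  have hfin : (Set.range fun a : {a : Fin 3 → K // a ≠ 0} => (onLine T a).card).Finite :=
    (Set.finite_Iic T.card).subset <| by
      rintro _ ⟨a, rfl⟩
      exact Finset.card_le_card (onLine_subset T a)
  obtain ⟨_, ⟨a, rfl⟩, ha⟩ := hfin.exists_maximal
    (Set.range_nonempty_iff_nonempty.mpr ⟨⟨fun _ => 1, fun h => one_ne_zero (congrFun h 0)⟩⟩)
  exact ⟨a, a.2, fun b hb => not_lt.mp fun hlt => hlt.not_ge (ha ⟨⟨b, hb⟩, rfl⟩ hlt.le)⟩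

/- Split off a line `a` carrying the most points: the points outside it support a functional on
forms of degree one less, so if there are any, induction gives a line with `k + 1` of them, and
then `a` has at least `k + 1` points as well, too many in total. -/
lemma exists_add_two_le_card_onLine {k : ℕ} {T : Finset (Pm K 2)} {c : Pm K 2 → K}
    (hc : ∀ a ∈ T, c a ≠ 0) (hT : T.Nonempty)
    (h : ∀ f : PR K 2, f.IsHomogeneous k → pointFunctional T c f = 0)
    (hcard : T.card ≤ 2 * k + 1) :
    ∃ a : Fin 3 → K, a ≠ 0 ∧ k + 2 ≤ (onLine T a).card := by
  classical
  induction k generalizing T c with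
  | zero =>
    have := add_two_le_card_of_pointFunctional_eq_zero hc hT h
    lia
  | succ k ih =>
    have hlower := add_two_le_card_of_pointFunctional_eq_zero hc hT h
    obtain ⟨a, ha, hmax⟩ := exists_max_card_onLine T
    obtain ⟨a', ha', htwo⟩ := exists_two_le_card_onLine (T := T) (by lia)
    have hsplit := Finset.card_sdiff_add_card_eq_card (onLine_subset T a)
    have htwo_a := htwo.trans (hmax a' ha')
    refine ⟨a, ha, ?_⟩
    rcases (T \ onLine T a).eq_empty_or_nonempty with hempty | hne
    · rw [hempty, Finset.card_empty] at hsplit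
      lia
    have hres : ∀ f : PR K 2, f.IsHomogeneous k →
        pointFunctional (T \ onLine T a) (fun p => c p * eval p.rep (linForm a)) f = 0 := by
      intro f hf
      rw [pointFunctional_eq_of_subset Finset.sdiff_subset, ← pointFunctional_mul]
      · exact h _ (add_comm k 1 ▸ (isHomogeneous_linForm a).mul hf)
      · intro p hpT hp
        have hpa : p ∈ onLine T a := by simpa [hpT] using hp
        rw [eval_linForm, (mem_onLine.mp hpa).2, mul_zero]
    have hcres : ∀ p ∈ T \ onLine T a, c p * eval p.rep (linForm a) ≠ 0 := by
      intro p hp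
      rw [Finset.mem_sdiff, mem_onLine, not_and] at hp
      exact mul_ne_zero (hc p hp.1) (eval_linForm a p.rep ▸ hp.2 hp.1)
    obtain ⟨b, hb, hbcard⟩ := ih hcres hne hres (by lia)
    have hbres := Finset.card_le_card (onLine_subset (T \ onLine T a) b)
    have hbT := Finset.card_le_card (onLine_subset_onLine
      (Finset.sdiff_subset : T \ onLine T a ⊆ T) b)
    have := hmax b hb
    lia

end PlanePoints

section LeadingTerm

variable {K : Type} [Field K] {m : ℕ}

lemma eval_smul_of_isHomogeneous {f : PR K m} {n : ℕ} (hf : f.IsHomogeneous n) (t : K)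
    (v : Fin (m + 1) → K) : eval (t • v) f = t ^ n * eval v f := by
  rw [eval_eq, eval_eq, Finset.mul_sum]
  refine Finset.sum_congr rfl fun u hu => ?_
  simp only [Pi.smul_apply, smul_eq_mul, mul_pow, Finset.prod_mul_distrib,
    Finset.prod_pow_eq_pow_sum]
  rw [← hf.degree_eq_sum_deg_support hu]
  ring

lemma sub_C_eval_mul_X_pow_mem {f : PR K m} {n : ℕ} (hf : f.IsHomogeneous n) (l : Fin (m + 1)) :
    f - C (eval (Pi.single l 1) f) * X l ^ n ∈
      Ideal.span (X '' {l}ᶜ : Set (PR K m)) := by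
  have hmonomial (u : Fin (m + 1) →₀ ℕ) (hu : u.degree = n) :
      monomial u 1 - C (eval (Pi.single l 1) (monomial u 1)) * X l ^ n ∈
        Ideal.span (X '' {l}ᶜ : Set (PR K m)) := by
    by_cases hul : ∃ j ≠ l, u j ≠ 0
    · obtain ⟨j, hjl, huj⟩ := hul
      have heval : eval (Pi.single l 1) (monomial u (1 : K)) = 0 := by
        rw [eval_monomial, Finsupp.prod, Finset.prod_eq_zero (Finsupp.mem_support_iff.mpr huj),
          mul_zero]
        rw [Pi.single_eq_of_ne hjl, zero_pow huj]
      rw [heval, C_0, zero_mul, sub_zero]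
      exact Ideal.mem_of_dvd _ (by simpa [X_dvd_monomial] using huj)
        (Ideal.subset_span ⟨j, hjl, rfl⟩)
    · push Not at hul
      obtain rfl : u = Finsupp.single l n := by
        have hu' : u = Finsupp.single l (u l) := by
          ext j
          rcases eq_or_ne j l with rfl | hjl
          · simp
          · simp [hul j hjl, hjl]
        rw [hu', Finsupp.degree_single] at hu
        rw [hu', hu]
      simp [X_pow_eq_monomial, eval_monomial]
  rw [f.as_sum, map_sum, map_sum, Finset.sum_mul, ← Finset.sum_sub_distrib]
  refine Ideal.sum_mem _ fun u hu => ?_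
  have hdeg : u.degree = n := by_contra fun h => mem_support_iff.mp hu (hf.coeff_eq_zero h)
  convert Ideal.mul_mem_left _ (C (coeff u f)) (hmonomial u hdeg) using 1
  simp only [eval_monomial]
  rw [mul_sub, C_mul_monomial, mul_one, one_mul, C_mul, mul_assoc]

end LeadingTerm

section LineDivisor

variable {K : Type} [Field K]

variable (K) in
/-- The ideal `(xᵢ, xⱼʳ)` of the degree-`r` effective divisor of the line `xᵢ = 0` of `ℙ²` which
is supported at the point `xᵢ = xⱼ = 0`. -/
noncomputable def lineDivisor (i j : Fin 3) (r : ℕ) : Ideal (PR K 2) :=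
  Ideal.span {X i, X j ^ r}

variable {l j i : Fin 3} {r : ℕ}

lemma mem_lineDivisor {f : PR K 2} :
    f ∈ lineDivisor K i j r ↔ ∀ u ∈ f.support, u i ≠ 0 ∨ r ≤ u j := by
  have himage : ({X i, X j ^ r} : Set (PR K 2)) =
      (fun u => monomial u 1) '' {Finsupp.single i 1, Finsupp.single j r} := by
    rw [Set.image_pair, X_pow_eq_monomial, X]
  simp [lineDivisor, himage, mem_ideal_span_monomial_image, Nat.one_le_iff_ne_zero]

lemma X_mul_mem_lineDivisor (f : PR K 2) : X i * f ∈ lineDivisor K i j r :=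
  Ideal.mul_mem_right _ _ (Ideal.subset_span (by simp))

lemma X_pow_mul_mem_lineDivisor (f : PR K 2) : X j ^ r * f ∈ lineDivisor K i j r :=
  Ideal.mul_mem_right _ _ (Ideal.subset_span (by simp))

lemma X_mul_mem_lineDivisor_succ {f : PR K 2} (hf : f ∈ lineDivisor K i j r) :
    X j * f ∈ lineDivisor K i j (r + 1) := by
  obtain ⟨g, h, rfl⟩ := Ideal.mem_span_pair.mp hf
  exact Ideal.mem_span_pair.mpr ⟨X j * g, h, by ring⟩

lemma mul_X_pow_sub_mem_lineDivisor (hcover : ∀ k, k = l ∨ k = j ∨ k = i) {f : PR K 2} {n : ℕ}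
    (hf : f.IsHomogeneous n) (r : ℕ) :
    f * X j ^ r - C (eval (Pi.single l 1) f) * (X l ^ n * X j ^ r) ∈
      lineDivisor K i j (r + 1) := by
  have hsub : Ideal.span (X '' {l}ᶜ : Set (PR K 2)) ≤ Ideal.span {X i, X j} := by
    refine Ideal.span_mono ?_
    rintro _ ⟨k, hk, rfl⟩
    rcases hcover k with rfl | rfl | rfl <;> simp_all
  obtain ⟨g, h, hgh⟩ := Ideal.mem_span_pair.mp (hsub (sub_C_eval_mul_X_pow_mem hf l))
  exact Ideal.mem_span_pair.mpr
    ⟨g * X j ^ r, h, by linear_combination (X j ^ r : PR K 2) * hgh⟩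

open scoped Classical in
/- A form `F` of degree `n` vanishing at all points where `q ≠ 0`, except possibly at the support
`e` of the divisor, would satisfy `F xⱼʳ ≡ F(e) xₗⁿ xⱼʳ` modulo the ideal of the divisor. -/
lemma add_one_le_card_of_pointFunctional_ne_zero (hlj : l ≠ j) (hli : l ≠ i) (hji : j ≠ i)
    {T : Finset (Pm K 2)} {c : Pm K 2 → K} {q : PR K 2} {n r : ℕ} (hr : r ≠ 0)
    (hkill : ∀ f : PR K 2, f.IsHomogeneous (n + r) → f ∈ lineDivisor K i j (r + 1) →
      pointFunctional T c (q * f) = 0)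
    (hne : pointFunctional T c (q * (X l ^ n * X j ^ r)) ≠ 0) :
    n + 1 ≤ ({a ∈ T | eval a.rep q ≠ 0} : Finset (Pm K 2)).card := by
  by_contra! hlt
  have hsingle : (Pi.single l 1 : Fin 3 → K) ≠ 0 := by simp
  let e : Pm K 2 := Projectivization.mk K (Pi.single l 1) hsingle
  obtain ⟨t, ht⟩ := Projectivization.exists_smul_eq_mk_rep K _ hsingle
  obtain ⟨F, hF, hFe, hFT⟩ := exists_form_separating_of_card_le
    (Finset.notMem_erase e {a ∈ T | eval a.rep q ≠ 0}) (k := n)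
    ((Finset.card_erase_le).trans (Nat.lt_succ_iff.mp hlt))
  have hFl : eval (Pi.single l 1) F ≠ 0 := by
    intro h
    apply hFe
    rw [← ht, Units.smul_def, eval_smul_of_isHomogeneous hF, h, mul_zero]
  have hvanish : pointFunctional T c (q * (F * X j ^ r)) = 0 := by
    rw [pointFunctional_apply]
    refine Finset.sum_eq_zero fun a ha => ?_
    by_cases hqa : eval a.rep q = 0
    · simp [hqa]
    by_cases hae : a = e
    · have hj : a.rep j = 0 := by
        rw [hae, ← ht]
        simp [hlj.symm]
      simp [hj, hr]
    · simp [hFT a (by simp [hae, ha, hqa])]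
  have hdiff := hkill _
    (((hF.mul (isHomogeneous_X_pow j r)).sub
      (((isHomogeneous_X_pow l n).mul (isHomogeneous_X_pow j r)).C_mul _)))
    (mul_X_pow_sub_mem_lineDivisor (l := l) (by lia) hF r)
  rw [mul_sub, map_sub, hvanish, mul_left_comm, C_mul', map_smul, zero_sub, neg_eq_zero,
    smul_eq_zero] at hdiff
  exact hdiff.elim hFl hne

end LineDivisor

section StandardPair

variable {K : Type} [Field K] {w d : ℕ}

lemma isHomogeneous_X_pow_mul_X_pow {m k : ℕ} (i j : Fin (m + 1)) {n r : ℕ} (h : n + r = k) :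
    (X i ^ n * X j ^ r : PR K m).IsHomogeneous k :=
  h ▸ (isHomogeneous_X_pow i n).mul (isHomogeneous_X_pow j r)

lemma linForm_mul_X_two_mul (a : Fin 3 → K) (f : PR K 2) :
    linForm (m := 2) a * X 2 * f =
      a 0 • (X 2 * (X 0 * f)) + a 1 • (X 2 * (X 1 * f)) + a 2 • (X 2 * (X 2 * f)) := by
  have hsum : linForm (m := 2) a = C (a 0) * X 0 + C (a 1) * X 1 + C (a 2) * X 2 :=
    Fin.sum_univ_three _
  simp only [hsum, smul_eq_C_mul]
  ring

/-- The functional `Ψ`, restricted to forms of degree `d`, is in the span of `ν_d(A)` for the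
standard scheme `A` with ideal `(x₂, x₁ʷ) ∩ (x₁, x₀ʷ)`, but stays outside it when the degree `w` of
either of the two divisors is lowered by one. -/
structure SpansStandardMinimally (w d : ℕ) (Ψ : PR K 2 →ₗ[K] K) : Prop where
  kills : ∀ f : PR K 2, f.IsHomogeneous d → f ∈ lineDivisor K 2 1 w ⊓ lineDivisor K 1 0 w → Ψ f = 0
  ne_zero_left : Ψ (X 0 ^ (d + 1 - w) * X 1 ^ (w - 1)) ≠ 0
  ne_zero_right : Ψ (X 2 ^ (d + 1 - w) * X 0 ^ (w - 1)) ≠ 0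

namespace SpansStandardMinimally

variable {T : Finset (Pm K 2)} {c : Pm K 2 → K}

open scoped Classical in
lemma card_X_two_ne_zero (h : SpansStandardMinimally w d (pointFunctional T c)) (hw : 2 ≤ w)
    (hd : w ≤ d) :
    d + 1 ≤ ({a ∈ T | eval a.rep (X 2 : PR K 2) ≠ 0} : Finset (Pm K 2)).card + w := by
  obtain ⟨r, rfl⟩ := Nat.exists_eq_add_of_le' hw
  obtain ⟨n, rfl⟩ := Nat.exists_eq_add_of_le' hd
  have := add_one_le_card_of_pointFunctional_ne_zero (T := T) (c := c) (q := X 2)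
    (l := 2) (j := 0) (i := 1) (n := n) (r := r + 1) (by decide) (by decide) (by decide)
    (by lia) (fun f hf hfJ => h.kills _ ?_ ⟨X_mul_mem_lineDivisor f, Ideal.mul_mem_left _ _ hfJ⟩) ?_
  · lia
  · convert (isHomogeneous_X K (2 : Fin 3)).mul hf using 1
    ring
  · convert h.ne_zero_right using 2
    rw [show n + (r + 2) + 1 - (r + 2) = n + 1 by lia, show r + 2 - 1 = r + 1 by lia]
    ring

open scoped Classical in
lemma card_X_one_ne_zero (h : SpansStandardMinimally w d (pointFunctional T c)) (hw : 3 ≤ w)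
    (hd : w ≤ d) :
    d + 2 ≤ ({a ∈ T | eval a.rep (X 1 : PR K 2) ≠ 0} : Finset (Pm K 2)).card + w := by
  obtain ⟨r, rfl⟩ := Nat.exists_eq_add_of_le' hw
  obtain ⟨n, rfl⟩ := Nat.exists_eq_add_of_le' hd
  have := add_one_le_card_of_pointFunctional_ne_zero (T := T) (c := c) (q := X 1)
    (l := 0) (j := 1) (i := 2) (n := n + 1) (r := r + 1) (by decide) (by decide) (by decide)
    (by lia) (fun f hf hfJ => h.kills _ ?_
      ⟨X_mul_mem_lineDivisor_succ hfJ, X_mul_mem_lineDivisor f⟩) ?_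
  · lia
  · convert (isHomogeneous_X K (1 : Fin 3)).mul hf using 1
    ring
  · convert h.ne_zero_left using 2
    rw [show n + (r + 3) + 1 - (r + 3) = n + 1 by lia, show r + 3 - 1 = r + 2 by lia]
    ring

lemma apply_X_two_mul_X_mul {Ψ : PR K 2 →ₗ[K] K} (h : SpansStandardMinimally w (d + 2) Ψ)
    {f : PR K 2} (hf : f.IsHomogeneous d) {i : Fin 3} (hfi : X i * f ∈ lineDivisor K 1 0 w) :
    Ψ (X 2 * (X i * f)) = 0 := by
  refine h.kills _ ?_ ⟨X_mul_mem_lineDivisor _, Ideal.mul_mem_left _ _ hfi⟩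
  convert (isHomogeneous_X K (2 : Fin 3)).mul ((isHomogeneous_X K i).mul hf) using 1
  ring

open scoped Classical in
lemma card_linForm_mul_X_two_ne_zero_of_eq_zero
    (h : SpansStandardMinimally w d (pointFunctional T c)) (hw : 3 ≤ w) (hd : w < d)
    {a : Fin 3 → K} (ha0 : a 0 ≠ 0) (ha2 : a 2 = 0) :
    d + 1 ≤ ({p ∈ T | eval p.rep (linForm a * X 2) ≠ 0} : Finset (Pm K 2)).card + w := by
  obtain ⟨r, rfl⟩ := Nat.exists_eq_add_of_le' hw
  obtain ⟨n, rfl⟩ := Nat.exists_eq_add_of_lt hd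
  rw [show r + 3 + n + 1 = (n + (r + 2)) + 2 by ring] at h ⊢
  have hexpand (f : PR K 2) : linForm a * X 2 * f =
      a 0 • (X 2 * (X 0 * f)) + a 1 • (X 2 * (X 1 * f)) := by
    rw [linForm_mul_X_two_mul, ha2, zero_smul, add_zero]
  have hbound := add_one_le_card_of_pointFunctional_ne_zero (T := T) (c := c)
    (q := linForm a * X 2) (l := 2) (j := 0) (i := 1) (n := n + 1) (r := r + 1)
    (by decide) (by decide) (by decide) (by lia) (fun f hf hfJ => ?_) ?_
  · lia
  · have hf' : f.IsHomogeneous (n + (r + 2)) := by convert hf using 1; ring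
    rw [hexpand, map_add, map_smul, map_smul,
      h.apply_X_two_mul_X_mul hf' (X_mul_mem_lineDivisor_succ hfJ),
      h.apply_X_two_mul_X_mul hf' (X_mul_mem_lineDivisor f), smul_zero, smul_zero, add_zero]
  · have hne : pointFunctional T c (X 2 * (X 0 * (X 2 ^ (n + 1) * X 0 ^ (r + 1)))) ≠ 0 := by
      convert h.ne_zero_right using 2
      rw [show n + (r + 2) + 2 + 1 - (r + 3) = n + 2 by lia, show r + 3 - 1 = r + 2 by lia]
      ring
    rw [hexpand, map_add, map_smul, map_smul,
      h.apply_X_two_mul_X_mul (isHomogeneous_X_pow_mul_X_pow _ _ (by ring))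
        (X_mul_mem_lineDivisor _), smul_zero, add_zero]
    exact smul_ne_zero ha0 hne

open scoped Classical in
lemma card_linForm_mul_X_two_ne_zero_of_ne_zero
    (h : SpansStandardMinimally w d (pointFunctional T c)) (hw : 3 ≤ w) (hd : w < d)
    {a : Fin 3 → K} (ha2 : a 2 ≠ 0) :
    d ≤ ({p ∈ T | eval p.rep (linForm a * X 2) ≠ 0} : Finset (Pm K 2)).card + w := by
  obtain ⟨r, rfl⟩ := Nat.exists_eq_add_of_le' hw
  obtain ⟨n, rfl⟩ := Nat.exists_eq_add_of_lt hd
  rw [show r + 3 + n + 1 = (n + (r + 2)) + 2 by ring] at h ⊢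
  have hbound := add_one_le_card_of_pointFunctional_ne_zero (T := T) (c := c)
    (q := linForm a * X 2) (l := 2) (j := 0) (i := 1) (n := n) (r := r + 2)
    (by decide) (by decide) (by decide) (by lia) (fun f hf hfJ => ?_) ?_
  · lia
  · have hzero (i : Fin 3) := h.apply_X_two_mul_X_mul (i := i) hf (Ideal.mul_mem_left _ _ hfJ)
    simp only [linForm_mul_X_two_mul, map_add, map_smul, hzero, smul_zero, add_zero]
  · have hne : pointFunctional T c (X 2 * (X 2 * (X 2 ^ n * X 0 ^ (r + 2)))) ≠ 0 := by
      convert h.ne_zero_right using 2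
      rw [show n + (r + 2) + 2 + 1 - (r + 3) = n + 2 by lia, show r + 3 - 1 = r + 2 by lia]
      ring
    have hX0 : X 0 * (X 2 ^ n * X 0 ^ (r + 2)) ∈ lineDivisor K 1 0 (r + 3) := by
      convert X_pow_mul_mem_lineDivisor (K := K) (i := 1) (j := 0) (r := r + 3) (X 2 ^ n) using 1
      ring
    have hdeg := isHomogeneous_X_pow_mul_X_pow (K := K) (m := 2) 2 0 (Eq.refl (n + (r + 2)))
    rw [linForm_mul_X_two_mul, map_add, map_add, map_smul, map_smul, map_smul,
      h.apply_X_two_mul_X_mul hdeg hX0,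
      h.apply_X_two_mul_X_mul hdeg (X_mul_mem_lineDivisor _), smul_zero, smul_zero, zero_add,
      zero_add]
    exact smul_ne_zero ha2 hne

lemma two_mul_add_three_le_card_of_forall_eq_zero
    (h : SpansStandardMinimally w d (pointFunctional T c)) (hw : 3 ≤ w) (hd : w ≤ d)
    (hT : ∀ p ∈ T, p.rep 1 = 0 ∨ p.rep 2 = 0) : 2 * d + 3 ≤ T.card + 2 * w := by
  classical
  have hdisj : Disjoint ({p ∈ T | eval p.rep (X 2 : PR K 2) ≠ 0} : Finset (Pm K 2))
      ({p ∈ T | eval p.rep (X 1 : PR K 2) ≠ 0} : Finset (Pm K 2)) := by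
    refine Finset.disjoint_filter.mpr fun p hp h2 h1 => ?_
    rw [eval_X] at h1 h2
    exact (hT p hp).elim h1 h2
  have hunion := Finset.card_le_card (Finset.union_subset
    (Finset.filter_subset (fun p => eval p.rep (X 2 : PR K 2) ≠ 0) T)
    (Finset.filter_subset (fun p => eval p.rep (X 1 : PR K 2) ≠ 0) T))
  rw [Finset.card_union_of_disjoint hdisj] at hunion
  have := h.card_X_two_ne_zero (by lia) hd
  have := h.card_X_one_ne_zero hw hd
  lia

/- The points off the lines `x₁ = 0` and `x₂ = 0`, with their weights multiplied by `x₁ x₂`, give a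
functional that vanishes on all forms of degree `d - 2`. -/
lemma exists_le_card_onLine (h : SpansStandardMinimally w d (pointFunctional T c)) (hd : 2 ≤ d)
    (hc : ∀ a ∈ T, c a ≠ 0) (hcard : T.card + 3 ≤ 2 * d)
    (hT : ∃ p ∈ T, p.rep 1 ≠ 0 ∧ p.rep 2 ≠ 0) :
    ∃ a : Fin 3 → K, (a 0 ≠ 0 ∨ a 2 ≠ 0) ∧ d ≤ (onLine T a).card := by
  classical
  let B : Finset (Pm K 2) := {p ∈ T | p.rep 1 ≠ 0 ∧ p.rep 2 ≠ 0}
  have hBT : B ⊆ T := Finset.filter_subset _ _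
  have hB : B.Nonempty := hT.imp fun p hp => Finset.mem_filter.mpr hp
  have hres (f : PR K 2) (hf : f.IsHomogeneous (d - 2)) :
      pointFunctional B (fun p => c p * eval p.rep (X 1 * X 2)) f = 0 := by
    rw [pointFunctional_eq_of_subset hBT, ← pointFunctional_mul]
    · refine h.kills _ ?_ ⟨?_, ?_⟩
      · convert ((isHomogeneous_X K (1 : Fin 3)).mul (isHomogeneous_X K 2)).mul hf using 1
        lia
      · rw [mul_comm (X 1), mul_assoc]
        exact X_mul_mem_lineDivisor _
      · rw [mul_assoc]
        exact X_mul_mem_lineDivisor _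
    · intro p hpT hpB
      have hzero : p.rep 1 * p.rep 2 = 0 := by
        by_contra hne
        exact hpB (Finset.mem_filter.mpr ⟨hpT, mul_ne_zero_iff.mp hne⟩)
      rw [map_mul, eval_X, eval_X, hzero, mul_zero]
  obtain ⟨a, ha, hcard⟩ := exists_add_two_le_card_onLine
    (fun p hp => mul_ne_zero (hc p (hBT hp))
      (by simpa using (Finset.mem_filter.mp hp).2)) hB hres
    ((Finset.card_le_card hBT).trans (by lia))
  refine ⟨a, ?_, (by lia : d ≤ d - 2 + 2).trans
    (hcard.trans (Finset.card_le_card (onLine_subset_onLine hBT a)))⟩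
  obtain ⟨p, hp⟩ := Finset.card_pos.mp (show 0 < (onLine B a).card by lia)
  obtain ⟨hpB, hpa⟩ := mem_onLine.mp hp
  by_contra! h02
  rw [Matrix.vec3_dotProduct, h02.1, h02.2, zero_mul, zero_mul, zero_add, add_zero] at hpa
  have ha1 := (mul_eq_zero.mp hpa).resolve_right (Finset.mem_filter.mp hpB).2.1
  exact ha (funext fun j => by fin_cases j <;> simp [h02, ha1])

theorem two_mul_add_three_le_card (h : SpansStandardMinimally w d (pointFunctional T c))
    (hw : 3 ≤ w) (hd : 2 * w ≤ d) (hc : ∀ a ∈ T, c a ≠ 0) : 2 * d + 3 ≤ T.card + 2 * w := by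
  classical
  by_cases hT : ∀ p ∈ T, p.rep 1 = 0 ∨ p.rep 2 = 0
  · exact h.two_mul_add_three_le_card_of_forall_eq_zero hw (by lia) hT
  push Not at hT
  by_contra! hlt
  obtain ⟨a, ha, hline⟩ := h.exists_le_card_onLine (by lia) hc (by lia) hT
  have hoff : d ≤ ({p ∈ T | eval p.rep (linForm a * X 2) ≠ 0} : Finset (Pm K 2)).card + w := by
    by_cases ha2 : a 2 = 0
    · have := h.card_linForm_mul_X_two_ne_zero_of_eq_zero hw (by lia)
        (ha.resolve_right (not_not_intro ha2)) ha2
      lia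
    · exact h.card_linForm_mul_X_two_ne_zero_of_ne_zero hw (by lia) ha2
  have hdisj : Disjoint ({p ∈ T | eval p.rep (linForm a * X 2) ≠ 0} : Finset (Pm K 2))
      (onLine T a) := by
    refine Finset.disjoint_left.mpr fun p hp hpa => (Finset.mem_filter.mp hp).2 ?_
    rw [map_mul, eval_linForm, (mem_onLine.mp hpa).2, zero_mul]
  have hunion := Finset.card_le_card (Finset.union_subset
    (Finset.filter_subset (fun p => eval p.rep (linForm a * X 2) ≠ 0) T) (onLine_subset T a))
  rw [Finset.card_union_of_disjoint hdisj] at hunion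
  lia

end SpansStandardMinimally

end StandardPair

section PolyFunctions

variable {K V W : Type} [Field K] [AddCommGroup V] [Module K V] [AddCommGroup W] [Module K W]

lemma linearMap_mem_polyFunctions (ℓ : V →ₗ[K] K) : ⇑ℓ ∈ polyFunctions K V :=
  Algebra.subset_adjoin ⟨ℓ, rfl⟩

lemma const_mem_polyFunctions (c : K) : (fun _ => c) ∈ polyFunctions K V :=
  (polyFunctions K V).algebraMap_mem c

lemma comp_mem_polyFunctions {G : V → W}
    (hG : ∀ ℓ : W →ₗ[K] K, (fun x => ℓ (G x)) ∈ polyFunctions K V) {F : W → K}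
    (hF : F ∈ polyFunctions K W) : (fun x => F (G x)) ∈ polyFunctions K V := by
  induction hF using Algebra.adjoin_induction with
  | mem F hF =>
    obtain ⟨ℓ, rfl⟩ := hF
    exact hG ℓ
  | algebraMap c => exact const_mem_polyFunctions c
  | add F₁ F₂ _ _ h₁ h₂ => exact add_mem h₁ h₂
  | mul F₁ F₂ _ _ h₁ h₂ => exact mul_mem h₁ h₂

lemma det_mem_polyFunctions {ι : Type} [Fintype ι] [DecidableEq ι] (M : ι → ι → V →ₗ[K] K) :
    (fun x => (Matrix.of fun p q => M p q x).det) ∈ polyFunctions K V := by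
  have hdet : (fun x => (Matrix.of fun p q => M p q x).det) =
      ∑ σ : Equiv.Perm ι, (Equiv.Perm.sign σ : ℤ) • ∏ p, ⇑(M (σ p) p) := by
    funext x
    simp [Matrix.det_apply, Units.smul_def]
  rw [hdet]
  refine Subalgebra.sum_mem _ fun σ _ => zsmul_mem ?_ _
  exact Subalgebra.prod_mem _ fun p _ => linearMap_mem_polyFunctions _

lemma exists_polynomial_of_mem_polyFunctions {h : K → K} (hh : h ∈ polyFunctions K K) :
    ∃ p : Polynomial K, ∀ t, h t = p.eval t := by
  induction hh using Algebra.adjoin_induction with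
  | mem h hh =>
    obtain ⟨ℓ, rfl⟩ := hh
    refine ⟨Polynomial.C (ℓ 1) * Polynomial.X, fun t => ?_⟩
    rw [Polynomial.eval_mul_X, Polynomial.eval_C, mul_comm, ← smul_eq_mul, ← map_smul, smul_eq_mul,
      mul_one]
  | algebraMap c => exact ⟨Polynomial.C c, fun t => by simp⟩
  | add h₁ h₂ _ _ ih₁ ih₂ =>
    obtain ⟨p₁, hp₁⟩ := ih₁
    obtain ⟨p₂, hp₂⟩ := ih₂
    exact ⟨p₁ + p₂, fun t => by simp [hp₁, hp₂]⟩
  | mul h₁ h₂ _ _ ih₁ ih₂ =>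
    obtain ⟨p₁, hp₁⟩ := ih₁
    obtain ⟨p₂, hp₂⟩ := ih₂
    exact ⟨p₁ * p₂, fun t => by simp [hp₁, hp₂]⟩

lemma eval_mem_polyFunctions (p : Polynomial K) : (fun t => p.eval t) ∈ polyFunctions K K := by
  induction p using Polynomial.induction_on' with
  | add p q hp hq =>
    simp only [Polynomial.eval_add]
    exact add_mem hp hq
  | monomial n c =>
    simp only [Polynomial.eval_monomial]
    exact mul_mem (const_mem_polyFunctions c)
      (pow_mem (linearMap_mem_polyFunctions (V := K) LinearMap.id) n)

lemma sum_eval_smul_comp_mem_polyFunctions {ι : Type} (s : Finset ι) (p : ι → Polynomial K)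
    (x : ι → V) {F : V → K} (hF : F ∈ polyFunctions K V) :
    (fun t => F (∑ n ∈ s, (p n).eval t • x n)) ∈ polyFunctions K K := by
  refine comp_mem_polyFunctions (fun ℓ => ?_) hF
  have hℓ : (fun t => ℓ (∑ n ∈ s, (p n).eval t • x n)) =
      fun t => (∑ n ∈ s, p n * Polynomial.C (ℓ (x n))).eval t := by
    funext t
    simp [Polynomial.eval_finsetSum]
  exact hℓ ▸ eval_mem_polyFunctions _

lemma eq_zero_at_zero_of_mem_polyFunctions [Infinite K] {h : K → K} (hh : h ∈ polyFunctions K K)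
    (hzero : ∀ t ≠ 0, h t = 0) : h 0 = 0 := by
  obtain ⟨p, hp⟩ := exists_polynomial_of_mem_polyFunctions hh
  have hinf : Set.Infinite {t | p.IsRoot t} :=
    (Set.finite_singleton (0 : K)).infinite_compl.mono fun t ht => (hp t).symm.trans (hzero t ht)
  rw [hp, Polynomial.eq_zero_of_infinite_isRoot p hinf, Polynomial.eval_zero]

end PolyFunctions

section PowerSums

variable {K : Type} [Field K] {m d : ℕ}

lemma nu_apply (v : Fin (m + 1) → K) (f : Hd K m d) : nu d v f = eval v (f : PR K m) := rfl

lemma nu_smul (t : K) (v : Fin (m + 1) → K) : nu d (t • v) = t ^ d • nu d v :=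
  LinearMap.ext fun f => eval_smul_of_isHomogeneous f.2 t v

lemma nu_ne_zero {v : Fin (m + 1) → K} (hv : v ≠ 0) : nu d v ≠ 0 := by
  obtain ⟨j, hj⟩ := Function.ne_iff.mp hv
  intro h
  have := LinearMap.congr_fun h ⟨X j ^ d, isHomogeneous_X_pow j d⟩
  rw [nu_apply, map_pow, eval_X] at this
  exact hj (eq_zero_of_pow_eq_zero this)

lemma nu_mem_dualSpan {T : Set (Pm K m)} {v : Fin (m + 1) → K} (hv : v ≠ 0)
    (hT : Projectivization.mk K v hv ∈ T) : nu d v ∈ dualSpan d T := by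
  obtain ⟨t, ht⟩ := Projectivization.exists_smul_eq_mk_rep K v hv
  rw [show v = (↑t⁻¹ : K) • (Projectivization.mk K v hv).rep by
    rw [← ht, ← Units.smul_def, inv_smul_smul], nu_smul]
  exact Submodule.smul_mem _ _ (Submodule.subset_span ⟨_, hT, rfl⟩)

lemma exists_eq_sum_of_mem_dualSpan {T : Finset (Pm K m)} {φ : Module.Dual K (Hd K m d)}
    (hφ : φ ∈ dualSpan d (T : Set (Pm K m))) : ∃ c : Pm K m → K, φ = ∑ a ∈ T, c a • nu d a.rep := by
  obtain ⟨c, hc, rfl⟩ := (Finsupp.mem_span_image_iff_linearCombination K).mp hφ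
  exact ⟨c, Finsupp.linearCombination_apply_of_mem_supported K hc⟩

/-- The degree-`d` component of a polynomial, as an element of the space of forms of degree `d`. -/
noncomputable def degreePart (d : ℕ) : PR K m →ₗ[K] Hd K m d :=
  (homogeneousComponent d).codRestrict _ (homogeneousComponent_isHomogeneous d)

lemma degreePart_of_isHomogeneous {f : PR K m} (hf : f.IsHomogeneous d) :
    degreePart d f = ⟨f, hf⟩ :=
  Subtype.ext ((homogeneousComponent_of_mem hf).trans (if_pos rfl))

lemma nu_degreePart (v : Fin (m + 1) → K) {f : PR K m} (hf : f.IsHomogeneous d) :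
    nu d v (degreePart d f) = eval v f := by
  rw [degreePart_of_isHomogeneous hf, nu_apply]

lemma dualSpan_univ [Infinite K] : dualSpan (K := K) (m := m) d Set.univ = ⊤ := by
  have := Module.Finite.iff_fg.mpr (homogeneousSubmodule_fg (σ := Fin (m + 1)) (R := K) d)
  rw [← Subspace.dualCoannihilator_dualAnnihilator_eq (W := dualSpan d Set.univ),
    Submodule.dualAnnihilator_eq_top_iff, eq_bot_iff]
  intro f hf
  rw [Submodule.mem_dualCoannihilator] at hf
  have hX : X 0 * (f : PR K m) = 0 := MvPolynomial.funext fun v => by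
    rcases eq_or_ne v 0 with rfl | hv
    · simp
    · rw [map_mul, ← nu_apply, hf _ (nu_mem_dualSpan hv (Set.mem_univ _)), mul_zero, map_zero]
  exact Subtype.ext ((mul_eq_zero.mp hX).resolve_left (X_ne_zero 0))

/-- The functional `φ` on forms of degree `d` is a combination of evaluations at `r` points; dually,
it is a sum of `r` powers of linear forms. -/
def IsPowerSum (d r : ℕ) (φ : Module.Dual K (Hd K m d)) : Prop :=
  ∃ T : Finset (Pm K m), T.card ≤ r ∧ φ ∈ dualSpan d (T : Set (Pm K m))

namespace IsPowerSum

variable {r s : ℕ} {φ ψ : Module.Dual K (Hd K m d)}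

lemma mono (h : IsPowerSum d r φ) (hrs : r ≤ s) : IsPowerSum d s φ :=
  h.imp fun _ hT => ⟨hT.1.trans hrs, hT.2⟩

lemma smul (h : IsPowerSum d r φ) (c : K) : IsPowerSum d r (c • φ) :=
  h.imp fun _ hT => ⟨hT.1, Submodule.smul_mem _ c hT.2⟩

lemma add (hφ : IsPowerSum d r φ) (hψ : IsPowerSum d s ψ) : IsPowerSum d (r + s) (φ + ψ) := by
  classical
  obtain ⟨S, hS, hφ⟩ := hφ
  obtain ⟨T, hT, hψ⟩ := hψ
  refine ⟨S ∪ T, (Finset.card_union_le S T).trans (add_le_add hS hT), ?_⟩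
  rw [Finset.coe_union, dualSpan, Set.image_union, Submodule.span_union]
  exact Submodule.add_mem_sup hφ hψ

lemma sum_smul_nu {ι : Type} (s : Finset ι) (c : ι → K) {v : ι → Fin (m + 1) → K}
    (hv : ∀ i ∈ s, v i ≠ 0) : IsPowerSum d s.card (∑ i ∈ s, c i • nu d (v i)) := by
  classical
  refine ⟨s.attach.image fun i : s => Projectivization.mk K (v i) (hv i i.2),
    Finset.card_image_le.trans_eq s.card_attach, Submodule.sum_mem _ fun i hi => ?_⟩
  exact Submodule.smul_mem _ _ (nu_mem_dualSpan (hv i hi)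
    (Finset.mem_coe.mpr (Finset.mem_image_of_mem _ (s.mem_attach ⟨i, hi⟩))))

end IsPowerSum

lemma exists_isPowerSum [Infinite K] (φ : Module.Dual K (Hd K m d)) : ∃ r, IsPowerSum d r φ := by
  classical
  have hφ : φ ∈ dualSpan d Set.univ := by
    rw [dualSpan_univ]
    exact Submodule.mem_top
  obtain ⟨S, hS, hφS⟩ := Submodule.mem_span_finite_of_mem_span hφ
  obtain ⟨T, -, -, rfl⟩ := Finset.exists_subset_injOn_image_eq_of_surjOn _ S hS
  rw [Finset.coe_image] at hφS
  exact ⟨T.card, T, le_rfl, hφS⟩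

/-- The point `ν_d(a)` of the Veronese variety. -/
noncomputable def veronese (d : ℕ) (a : Pm K m) : PN K m d :=
  Projectivization.mk K (nu d a.rep) (nu_ne_zero a.rep_nonzero)

lemma XSet_eq_range_veronese : XSet K m d = Set.range (veronese d) := by
  ext Q
  refine exists_congr fun a => ?_
  rw [← Projectivization.submodule_injective.eq_iff, veronese, Projectivization.submodule_mk,
    eq_comm]

lemma span_rep_image_veronese (T : Set (Pm K m)) :
    Submodule.span K (Projectivization.rep '' (veronese d '' T)) = dualSpan d T := by
  have hspan (a : Pm K m) :
      Submodule.span K {(veronese d a).rep} = Submodule.span K {nu d a.rep} := by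
    rw [← Projectivization.submodule_eq, veronese, Projectivization.submodule_mk]
  rw [dualSpan, Set.image_image, Set.image_eq_iUnion, Set.image_eq_iUnion, Submodule.span_iUnion₂,
    Submodule.span_iUnion₂]
  simp only [hspan]

lemma isPowerSum_rep_veronese (a : Pm K m) : IsPowerSum d 1 (veronese d a).rep := by
  refine ⟨{a}, (Finset.card_singleton a).le, ?_⟩
  rw [← span_rep_image_veronese]
  exact Submodule.subset_span ⟨_, ⟨a, by simp, rfl⟩, rfl⟩

lemma isPowerSum_iff_exists_finset {r : ℕ} {φ : Module.Dual K (Hd K m d)} :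
    IsPowerSum d r φ ↔ ∃ S : Finset (PN K m d), ↑S ⊆ XSet K m d ∧ S.card ≤ r ∧
      φ ∈ Submodule.span K (Projectivization.rep '' (S : Set (PN K m d))) := by
  classical
  constructor
  · rintro ⟨T, hT, hφ⟩
    refine ⟨T.image (veronese d), ?_, Finset.card_image_le.trans hT, ?_⟩
    · rw [XSet_eq_range_veronese, Finset.coe_image]
      exact Set.image_subset_range _ _
    · rwa [Finset.coe_image, span_rep_image_veronese]
  · rintro ⟨S, hSX, hS, hφ⟩
    rw [XSet_eq_range_veronese, ← Set.image_univ] at hSX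
    obtain ⟨T, -, hinj, rfl⟩ := Finset.exists_subset_injOn_image_eq_of_surjOn _ S hSX
    rw [Finset.coe_image, span_rep_image_veronese] at hφ
    exact ⟨T, (Finset.card_image_of_injOn hinj).symm.trans_le hS, hφ⟩

lemma srank_le_iff [Infinite K] {P : PN K m d} {r : ℕ} :
    srank d P ≤ r ↔ IsPowerSum d r P.rep := by
  constructor
  · intro h
    obtain ⟨n, hn⟩ := exists_isPowerSum P.rep
    obtain ⟨S, hSX, -, hPS⟩ := isPowerSum_iff_exists_finset.mp hn
    have hne : {r | ∃ S : Finset (PN K m d), ↑S ⊆ XSet K m d ∧ S.card = r ∧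
        P.rep ∈ Submodule.span K (Projectivization.rep '' (S : Set (PN K m d)))}.Nonempty :=
      ⟨S.card, S, hSX, rfl, hPS⟩
    obtain ⟨S, hSX, hcard, hPS⟩ := Nat.sInf_mem hne
    exact isPowerSum_iff_exists_finset.mpr ⟨S, hSX, hcard.trans_le h, hPS⟩
  · intro h
    obtain ⟨S, hSX, hcard, hPS⟩ := isPowerSum_iff_exists_finset.mp h
    refine le_trans (Nat.sInf_le ?_) hcard
    exact ⟨S, hSX, rfl, hPS⟩

/-- The functional `φ` lies in the Zariski closure of the sums of `s` powers. -/
def IsBorderPowerSum (d s : ℕ) (φ : Module.Dual K (Hd K m d)) : Prop :=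
  ∀ F ∈ polyFunctions K (Module.Dual K (Hd K m d)),
    (∀ χ, IsPowerSum d s χ → F χ = 0) → F φ = 0

lemma IsPowerSum.isBorderPowerSum {s : ℕ} {φ : Module.Dual K (Hd K m d)} (h : IsPowerSum d s φ) :
    IsBorderPowerSum d s φ :=
  fun _ _ hF => hF φ h

namespace IsBorderPowerSum

variable {s t : ℕ} {φ ψ : Module.Dual K (Hd K m d)}

lemma mono (h : IsBorderPowerSum d s φ) (hst : s ≤ t) : IsBorderPowerSum d t φ :=
  fun F hF hzero => h F hF fun χ hχ => hzero χ (hχ.mono hst)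

lemma map (h : IsBorderPowerSum d s φ)
    {g : Module.Dual K (Hd K m d) →ₗ[K] Module.Dual K (Hd K m d)}
    (hg : ∀ χ, IsPowerSum d s χ → IsPowerSum d s (g χ)) : IsBorderPowerSum d s (g φ) :=
  fun _ hF hzero => h _ (comp_mem_polyFunctions
    (fun ℓ => linearMap_mem_polyFunctions (ℓ ∘ₗ g)) hF) fun χ hχ => hzero _ (hg χ hχ)

lemma smul (h : IsBorderPowerSum d s φ) (c : K) : IsBorderPowerSum d s (c • φ) :=
  h.map (g := c • LinearMap.id) fun _ hχ => hχ.smul c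

lemma add (hφ : IsBorderPowerSum d s φ) (hψ : IsBorderPowerSum d t ψ) :
    IsBorderPowerSum d (s + t) (φ + ψ) := by
  intro F hF hzero
  have hshift (G : Module.Dual K (Hd K m d) → Module.Dual K (Hd K m d))
      (hG : ∀ ℓ : Module.Dual K (Hd K m d) →ₗ[K] K, ∃ c, ∀ x, ℓ (G x) = ℓ x + c) :
      (fun x => F (G x)) ∈ polyFunctions K (Module.Dual K (Hd K m d)) := by
    refine comp_mem_polyFunctions (fun ℓ => ?_) hF
    obtain ⟨c, hc⟩ := hG ℓ
    exact funext hc ▸ add_mem (linearMap_mem_polyFunctions ℓ) (const_mem_polyFunctions c)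
  have hφχ (χ : Module.Dual K (Hd K m d)) (hχ : IsPowerSum d t χ) : F (φ + χ) = 0 :=
    hφ _ (hshift (· + χ) fun ℓ => ⟨ℓ χ, fun x => map_add ℓ x χ⟩)
      fun θ hθ => hzero _ (hθ.add hχ)
  exact hψ _ (hshift (φ + ·) fun ℓ => ⟨ℓ φ, fun x => (map_add ℓ φ x).trans (add_comm _ _)⟩) hφχ

lemma of_curve [Infinite K] {ι : Type} (s : Finset ι) (p : ι → Polynomial K)
    (x : ι → Module.Dual K (Hd K m d)) {r : ℕ}
    (h : ∀ u ≠ 0, IsPowerSum d r (∑ n ∈ s, (p n).eval u • x n)) :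
    IsBorderPowerSum d r (∑ n ∈ s, (p n).eval 0 • x n) :=
  fun _ hF hzero => eq_zero_at_zero_of_mem_polyFunctions
    (sum_eval_smul_comp_mem_polyFunctions s p x hF) fun u hu => hzero _ (h u hu)

/- On a sum of `s` powers the catalecticant matrix is a product of matrices with inner dimension
`s`, so that its determinant vanishes if its size exceeds `s`. -/
lemma card_le_of_det_ne_zero {ι : Type} [Fintype ι] [DecidableEq ι]
    (hφ : IsBorderPowerSum d s φ) {g h : ι → PR K m} {e k : ℕ} (hg : ∀ p, (g p).IsHomogeneous e)
    (hh : ∀ q, (h q).IsHomogeneous k) (hek : e + k = d)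
    (hdet : (Matrix.of fun p q => φ (degreePart d (g p * h q))).det ≠ 0) :
    Fintype.card ι ≤ s := by
  by_contra! hlt
  refine hdet (hφ _ (det_mem_polyFunctions fun p q =>
    Module.Dual.eval K _ (degreePart d (g p * h q))) fun χ hχ => ?_)
  obtain ⟨T, hT, hχT⟩ := hχ
  obtain ⟨c, rfl⟩ := exists_eq_sum_of_mem_dualSpan hχT
  have hmul : Matrix.of (fun p q => Module.Dual.eval K _ (degreePart d (g p * h q))
        (∑ a ∈ T, c a • nu d a.rep)) =
      Matrix.of (fun p (a : T) => c a * eval a.1.rep (g p)) *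
        Matrix.of (fun (a : T) q => eval a.1.rep (h q)) := by
    ext p q
    have hgh : (g p * h q).IsHomogeneous d := hek ▸ (hg p).mul (hh q)
    simp only [Matrix.of_apply, Module.Dual.eval_apply, LinearMap.sum_apply, LinearMap.smul_apply,
      nu_degreePart _ hgh, Matrix.mul_apply, map_mul, smul_eq_mul, mul_assoc]
    exact (Finset.sum_coe_sort T fun a => c a * (eval a.rep (g p) * eval a.rep (h q))).symm
  by_contra hne
  have hrank := Matrix.rank_of_isUnit _ ((Matrix.isUnit_iff_isUnit_det _).mpr (Ne.isUnit hne))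
  have hle := (Matrix.rank_mul_le_left (Matrix.of fun p (a : T) => c a * eval a.1.rep (g p))
    (Matrix.of fun (a : T) q => eval a.1.rep (h q))).trans (Matrix.rank_le_card_width _)
  rw [← hmul, hrank, Fintype.card_coe] at hle
  lia

end IsBorderPowerSum

lemma mem_secantWrt_iff {s : ℕ} (hs : 0 < s) {P : PN K m d} :
    P ∈ secantWrt (XSet K m d) s ↔ IsBorderPowerSum d s P.rep := by
  simp only [secantWrt, zClosure, ← isPowerSum_iff_exists_finset, Set.mem_ofPred_eq]
  constructor
  · intro h F hF hzero
    rw [← one_smul K P.rep]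
    exact h F hF (fun Q hQ c => hzero _ (hQ.smul c)) 1
  · intro h F hF hzero c
    refine h.smul c F hF fun χ hχ => ?_
    rcases eq_or_ne χ 0 with rfl | hχ0
    · obtain ⟨v, hv⟩ := exists_ne (0 : Fin (m + 1) → K)
      rw [← zero_smul K (veronese d (Projectivization.mk K v hv)).rep]
      exact hzero _ ((isPowerSum_rep_veronese _).mono hs) 0
    · obtain ⟨c, hc⟩ := Projectivization.exists_smul_eq_mk_rep K χ hχ0
      have := hzero (Projectivization.mk K χ hχ0) (hc ▸ hχ.smul c) ((c⁻¹ : Kˣ) : K)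
      rwa [← hc, ← Units.smul_def, inv_smul_smul] at this

lemma brank_le_iff [Infinite K] {P : PN K m d} {s : ℕ} (hs : 0 < s) :
    brank d P ≤ s ↔ IsBorderPowerSum d s P.rep := by
  constructor
  · intro h
    obtain ⟨r, hr⟩ := exists_isPowerSum P.rep
    have hne : {s | 0 < s ∧ P ∈ secantWrt (XSet K m d) s}.Nonempty :=
      ⟨r + 1, r.succ_pos, (mem_secantWrt_iff r.succ_pos).mpr (hr.mono r.le_succ).isBorderPowerSum⟩
    obtain ⟨hpos, hmem⟩ := Nat.sInf_mem hne
    exact ((mem_secantWrt_iff hpos).mp hmem).mono h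
  · intro h
    exact Nat.sInf_le ⟨hs, (mem_secantWrt_iff hs).mpr h⟩

end PowerSums

section LinearSubstitution

variable {K : Type} [Field K] {m : ℕ}

/-- The algebra automorphism `f ↦ f ∘ g` of the polynomial ring, for a linear change of
coordinates `g`. -/
noncomputable def linSubst (g : (Fin (m + 1) → K) ≃ₗ[K] (Fin (m + 1) → K)) : PR K m ≃ₐ[K] PR K m :=
  have hinv (g : (Fin (m + 1) → K) ≃ₗ[K] (Fin (m + 1) → K)) :
      (bind₁ (LinearMap.toMatrix' (g : (Fin (m + 1) → K) →ₗ[K] _)).toMvPolynomial).comp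
        (bind₁ (LinearMap.toMatrix' (g.symm : (Fin (m + 1) → K) →ₗ[K] _)).toMvPolynomial) =
      AlgHom.id K (PR K m) := by
    ext i : 1
    rw [AlgHom.comp_apply, bind₁_X_right, ← Matrix.toMvPolynomial_mul, ← LinearMap.toMatrix'_comp,
      g.symm_comp, LinearMap.toMatrix'_id, Matrix.toMvPolynomial_one, AlgHom.id_apply]
  AlgEquiv.ofAlgHom _ _ (hinv g) (by simpa using hinv g.symm)

variable (g : (Fin (m + 1) → K) ≃ₗ[K] (Fin (m + 1) → K))

lemma linSubst_apply (f : PR K m) : linSubst g f =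
    bind₁ (LinearMap.toMatrix' (g : (Fin (m + 1) → K) →ₗ[K] _)).toMvPolynomial f :=
  rfl

lemma linSubst_symm : (linSubst g).symm = linSubst g.symm :=
  rfl

lemma eval_linSubst (v : Fin (m + 1) → K) (f : PR K m) :
    eval v (linSubst g f) = eval (g v) f := by
  rw [linSubst_apply, ← coe_aeval_eq_eval, ← coe_aeval_eq_eval, RingHom.coe_coe, RingHom.coe_coe,
    aeval_bind₁]
  congr 2
  ext i
  rw [aeval_eq_eval, Matrix.toMvPolynomial_eval_eq_apply, LinearMap.toMatrix'_mulVec]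
  rfl

variable {g} in
lemma isHomogeneous_linSubst {f : PR K m} {n : ℕ} (hf : f.IsHomogeneous n) :
    (linSubst g f).IsHomogeneous n := by
  have h := hf.aeval (LinearMap.toMatrix' (g : (Fin (m + 1) → K) →ₗ[K] _)).toMvPolynomial
    fun i => Matrix.toMvPolynomial_isHomogeneous _ i
  rw [one_mul] at h
  exact h

lemma homogeneousComponent_linSubst (n : ℕ) (f : PR K m) :
    homogeneousComponent n (linSubst g f) = linSubst g (homogeneousComponent n f) := by
  induction f using MvPolynomial.induction_on' with
  | monomial u a =>
    have hu : (monomial u a).IsHomogeneous u.degree := isHomogeneous_monomial a rfl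
    rw [homogeneousComponent_of_mem (isHomogeneous_linSubst hu), homogeneousComponent_of_mem hu,
      apply_ite (linSubst g), map_zero]
  | add f h hf hh => simp only [map_add, hf, hh]

lemma map_linSubst_homogeneousSubmodule (n : ℕ) :
    (Hd K m n).map (linSubst g).toLinearEquiv.toLinearMap = Hd K m n := by
  refine le_antisymm ?_ fun f hf => ⟨linSubst g.symm f, isHomogeneous_linSubst hf, ?_⟩
  · rintro _ ⟨f, hf, rfl⟩
    exact isHomogeneous_linSubst hf
  · exact (linSubst g).apply_symm_apply f

lemma hilbQ_comap_linSubst (I : Ideal (PR K m)) (t : ℕ) :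
    hilbQ (I.comap (linSubst g)) t = hilbQ I t := by
  let e := Ideal.quotientEquivAlg (I.comap (linSubst g)) I (linSubst g)
    (Ideal.map_comap_of_surjective _ (linSubst g).surjective I).symm
  have hmap : (Hd K m t).map (Ideal.Quotient.mkₐ K I).toLinearMap =
      ((Hd K m t).map (Ideal.Quotient.mkₐ K (I.comap (linSubst g))).toLinearMap).map
        e.toLinearEquiv.toLinearMap := by
    conv_lhs => rw [← map_linSubst_homogeneousSubmodule g t]
    rw [← Submodule.map_comp, ← Submodule.map_comp]
    rfl
  rw [hilbQ, hilbQ, hmap]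
  exact (e.toLinearEquiv.finrank_map_eq _).symm

lemma idealDeg_comap_linSubst (I : Ideal (PR K m)) :
    idealDeg (I.comap (linSubst g)) = idealDeg I := by
  simp only [idealDeg, hilbQ_comap_linSubst]

lemma mem_span_range_X_of_isHomogeneous {f : PR K m} {n : ℕ} (hf : f.IsHomogeneous n)
    (hn : n ≠ 0) : f ∈ Ideal.span (Set.range (X : Fin (m + 1) → PR K m)) := by
  rw [← Set.image_univ, mem_ideal_span_X_image]
  intro u hu
  by_contra! hzero
  obtain rfl : u = 0 := Finsupp.ext fun i => hzero i (Set.mem_univ i)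
  refine mem_support_iff.mp hu (hf.coeff_eq_zero ?_)
  rw [map_zero]
  exact hn.symm

/-- The subscheme `g(Z)`, for a linear change of coordinates `g`. -/
noncomputable def mapSubscheme (Z : PSub K m) : PSub K m where
  I := Z.I.comap (linSubst g)
  homog f hf n := by
    rw [Ideal.mem_comap, ← homogeneousComponent_linSubst]
    exact Z.homog _ hf n
  sat f hf := by
    refine Z.sat _ fun i => ?_
    have hspan : Ideal.span (Set.range X) ≤
        (Z.I.comap (linSubst g)).colon {f} :=
      Ideal.span_le.mpr <| by
        rintro _ ⟨j, rfl⟩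
        exact Submodule.mem_colon_singleton.mpr (hf j)
    have hmem := Submodule.mem_colon_singleton.mp <| hspan <|
      mem_span_range_X_of_isHomogeneous
        (isHomogeneous_linSubst (g := g.symm) (isHomogeneous_X K i)) one_ne_zero
    rw [smul_eq_mul, Ideal.mem_comap, map_mul] at hmem
    convert hmem
    exact ((linSubst g).apply_symm_apply _).symm

/-- The functional `f ↦ φ (f ∘ g)` on forms of degree `d`; it sends `nu d v` to `nu d (g v)`. -/
noncomputable def mapDual (d : ℕ) :
    Module.Dual K (Hd K m d) →ₗ[K] Module.Dual K (Hd K m d) :=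
  ((linSubst g).toLinearEquiv.toLinearMap.restrict fun _ => isHomogeneous_linSubst).dualMap

variable {d : ℕ}

lemma mapDual_apply (φ : Module.Dual K (Hd K m d)) (f : Hd K m d) :
    mapDual g d φ f = φ ⟨linSubst g f, isHomogeneous_linSubst f.2⟩ :=
  rfl

@[simp]
lemma mapDual_symm_mapDual (φ : Module.Dual K (Hd K m d)) :
    mapDual g.symm d (mapDual g d φ) = φ := by
  ext f
  simp only [mapDual_apply]
  congr 2
  exact (linSubst g).apply_symm_apply _

@[simp]
lemma mapDual_mapDual_symm (φ : Module.Dual K (Hd K m d)) :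
    mapDual g d (mapDual g.symm d φ) = φ :=
  mapDual_symm_mapDual g.symm φ

lemma mapDual_nu (v : Fin (m + 1) → K) : mapDual g d (nu d v) = nu d (g v) := by
  ext f
  simp only [mapDual_apply, nu_apply, eval_linSubst]

lemma isPowerSum_mapDual {r : ℕ} {φ : Module.Dual K (Hd K m d)} :
    IsPowerSum d r (mapDual g d φ) ↔ IsPowerSum d r φ := by
  have himp (h : (Fin (m + 1) → K) ≃ₗ[K] (Fin (m + 1) → K)) (χ : Module.Dual K (Hd K m d))
      (hχ : IsPowerSum d r χ) : IsPowerSum d r (mapDual h d χ) := by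
    obtain ⟨T, hT, hχ⟩ := hχ
    obtain ⟨c, rfl⟩ := exists_eq_sum_of_mem_dualSpan hχ
    simp only [map_sum, map_smul, mapDual_nu]
    exact (IsPowerSum.sum_smul_nu T c fun a _ => h.map_ne_zero_iff.mpr a.rep_nonzero).mono hT
  exact ⟨fun h => by simpa using himp g.symm _ h, himp g φ⟩

lemma isBorderPowerSum_mapDual {r : ℕ} {φ : Module.Dual K (Hd K m d)} :
    IsBorderPowerSum d r (mapDual g d φ) ↔ IsBorderPowerSum d r φ :=
  ⟨fun h => by simpa using h.map fun _ hχ => (isPowerSum_mapDual g.symm).mpr hχ,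
    fun h => h.map fun _ hχ => (isPowerSum_mapDual g).mpr hχ⟩

/-- The functional `φ` is in the span of the Veronese image of the scheme with ideal `I`, but not
in the span of the Veronese image of any proper closed subscheme. -/
def SpansMinimally (I : Ideal (PR K m)) (d : ℕ) (φ : Module.Dual K (Hd K m d)) : Prop :=
  φ ∈ schemeSpanSub I d ∧ ∀ A' : PSub K m, I < A'.I → φ ∉ schemeSpanSub A'.I d

variable {I : Ideal (PR K m)} {φ : Module.Dual K (Hd K m d)}

lemma mapDual_mem_schemeSpanSub (h : φ ∈ schemeSpanSub I d) :
    mapDual g d φ ∈ schemeSpanSub (I.comap (linSubst g)) d :=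
  fun f hf => h ⟨linSubst g f, isHomogeneous_linSubst f.2⟩ hf

lemma comap_linSubst_comap_linSubst_symm :
    (I.comap (linSubst g)).comap (linSubst g.symm) = I := by
  ext f
  simp only [Ideal.mem_comap]
  rw [← linSubst_symm, AlgEquiv.apply_symm_apply]

lemma SpansMinimally.mapDual (h : SpansMinimally I d φ) :
    SpansMinimally (I.comap (linSubst g)) d (mapDual g d φ) := by
  refine ⟨mapDual_mem_schemeSpanSub g h.1, fun A' hA' hφ => ?_⟩
  have hlt : I < A'.I.comap (linSubst g.symm) := by
    have hmono : StrictMono (Ideal.comap (linSubst g.symm)) :=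
      Monotone.strictMono_of_injective (fun _ _ => Ideal.comap_mono)
        (Ideal.comap_injective_of_surjective _ (linSubst g.symm).surjective)
    simpa [comap_linSubst_comap_linSubst_symm] using hmono hA'
  have hspan := mapDual_mem_schemeSpanSub g.symm hφ
  rw [mapDual_symm_mapDual] at hspan
  exact h.2 (mapSubscheme g.symm A') hlt hspan

end LinearSubstitution

section PlaneCoordinates

open Module

variable {K : Type} [Field K]

lemma repr_eq_zero_of_mem_of_notMem {ι V : Type} [AddCommGroup V] [Module K V]
    (b : Basis ι K V) {W : Submodule K V} {s : Finset ι} (hW : finrank K W = s.card)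
    (hs : s.Nonempty) (hb : ∀ i ∈ s, b i ∈ W) {v : V} (hv : v ∈ W) {l : ι} (hl : l ∉ s) :
    b.repr v l = 0 := by
  have hfin : FiniteDimensional K W :=
    Module.finite_of_finrank_pos (hW ▸ Finset.card_pos.mpr hs)
  have hspan : Submodule.span K (b '' s) = W := by
    refine Submodule.eq_of_le_of_finrank_eq (Submodule.span_le.mpr ?_) ?_
    · rintro _ ⟨i, hi, rfl⟩
      exact hb i hi
    · rw [hW, Set.image_eq_range]
      exact (finrank_span_eq_card (b.linearIndependent.comp _ Subtype.val_injective)).trans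
        (Fintype.card_coe s)
  rw [← hspan, Basis.mem_span_image] at hv
  exact Finsupp.notMem_support_iff.mp fun h => hl (hv h)

lemma linearIndependent_vec3_of_notMem {V : Type} [AddCommGroup V] [Module K V]
    {W : Submodule K V} {u v x : V} (huW : u ∈ W) (hvW : v ∈ W) (hu : u ≠ 0)
    (hv : v ∉ Submodule.span K {u}) (hx : x ∉ W) : LinearIndependent K ![u, v, x] := by
  have hpair : LinearIndependent K ![u, v] :=
    (LinearIndependent.pair_iff' hu).mpr fun t ht =>
      hv (Submodule.mem_span_singleton.mpr ⟨t, ht⟩)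
  have hsnoc : ![u, v, x] = Fin.snoc (α := fun _ => V) ![u, v] x := by
    ext i : 1
    fin_cases i <;> rfl
  rw [hsnoc, linearIndependent_finSnoc]
  refine ⟨hpair, fun h => hx (Submodule.span_le.mpr ?_ h)⟩
  simp [Set.insert_subset_iff, huW, hvW]

lemma submodule_le_iff_rep_mem {m : ℕ} {a : Pm K m} {W : Submodule K (Fin (m + 1) → K)} :
    a.submodule ≤ W ↔ a.rep ∈ W := by
  rw [Projectivization.submodule_eq, Submodule.span_singleton_le_iff_mem]

variable {L1 L2 : Set (Pm K 2)} {O O2 : Pm K 2}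

lemma exists_coordinates (hL1 : IsLine L1) (hL2 : IsLine L2) (hO : L1 ∩ L2 = {O}) (hO2 : O2 ∈ L2)
    (hO2O : O2 ≠ O) :
    ∃ g : (Fin 3 → K) ≃ₗ[K] (Fin 3 → K), g O.rep = Pi.single 0 1 ∧ g O2.rep = Pi.single 2 1 ∧
      (∀ p ∈ L1, g p.rep 2 = 0) ∧ ∀ p ∈ L2, g p.rep 1 = 0 := by
  obtain ⟨W1, hW1, rfl⟩ := hL1
  obtain ⟨W2, hW2, rfl⟩ := hL2
  simp only [Set.ext_iff, Set.mem_inter_iff, Set.mem_ofPred_eq, submodule_le_iff_rep_mem,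
    Set.mem_singleton_iff] at hO hO2 ⊢
  obtain ⟨hOW1, hOW2⟩ := (hO O).mpr rfl
  have hO2W1 : O2.rep ∉ W1 := fun h => hO2O ((hO O2).mp ⟨h, hO2⟩)
  obtain ⟨e, heW1, he⟩ : ∃ e ∈ W1, e ∉ Submodule.span K {O.rep} := by
    refine SetLike.exists_of_lt (lt_of_le_of_ne ?_ ?_)
    · exact (Submodule.span_singleton_le_iff_mem _ _).mpr hOW1
    · rintro rfl
      rw [finrank_span_singleton O.rep_nonzero] at hW1
      lia
  have hindep : LinearIndependent K ![O.rep, e, O2.rep] :=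
    linearIndependent_vec3_of_notMem hOW1 heW1 O.rep_nonzero he hO2W1
  let b := basisOfLinearIndependentOfCardEqFinrank hindep (by simp)
  have hb : ⇑b = ![O.rep, e, O2.rep] := coe_basisOfLinearIndependentOfCardEqFinrank hindep _
  have hsingle (i : Fin 3) : b.equivFun (b i) = Pi.single i 1 := by
    ext j
    simp [Pi.single_apply, eq_comm]
  refine ⟨b.equivFun, ?_, ?_, fun p hp => ?_, fun p hp => ?_⟩
  · rw [← hsingle 0, hb]
    rfl
  · rw [← hsingle 2, hb]
    rfl
  · refine repr_eq_zero_of_mem_of_notMem b (s := {0, 1}) hW1 (by simp) ?_ hp (by decide)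
    simp [hb, hOW1, heW1]
  · refine repr_eq_zero_of_mem_of_notMem b (s := {0, 2}) hW2 (by simp) ?_ hp (by decide)
    simp [hb, hOW2, hO2]

end PlaneCoordinates

section HomogeneousIdeals

variable {K : Type} [Field K] {m : ℕ} {I J : Ideal (PR K m)}

lemma isHomogI_inf (hI : IsHomogI I) (hJ : IsHomogI J) : IsHomogI (I ⊓ J) :=
  fun f hf n => ⟨hI f hf.1 n, hJ f hf.2 n⟩

lemma isSatI_inf (hI : IsSatI I) (hJ : IsSatI J) : IsSatI (I ⊓ J) :=
  fun f hf => ⟨hI f fun i => (hf i).1, hJ f fun i => (hf i).2⟩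

lemma exists_isHomogeneous_notMem (hI : IsHomogI I) (hIJ : ¬I ≤ J) :
    ∃ (n : ℕ) (f : PR K m), f.IsHomogeneous n ∧ f ∈ I ∧ f ∉ J := by
  obtain ⟨f, hfI, hfJ⟩ := SetLike.not_le_iff_exists.mp hIJ
  by_contra! hall
  rw [← sum_homogeneousComponent f] at hfJ
  exact hfJ (Ideal.sum_mem _ fun n _ =>
    hall n _ (homogeneousComponent_isHomogeneous n f) (hI f hfI n))

lemma mem_of_X_pow_mul_mem (hI : IsSatI I) {l : Fin (m + 1)} {g : PR K m}
    (hne : ∀ k ≠ l, X k * g ∈ I) {e : ℕ} (h : X l ^ e * g ∈ I) : g ∈ I := by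
  induction e with
  | zero => simpa using h
  | succ e ih =>
    refine ih (hI _ fun k => ?_)
    rcases eq_or_ne k l with rfl | hkl
    · convert h using 1
      ring
    · rw [mul_left_comm]
      exact Ideal.mul_mem_left _ _ (hne k hkl)

lemma mem_radical_of_forall_mem_pzeroLocus [IsAlgClosed K] (hI : IsHomogI I) {f : PR K m} {n : ℕ}
    (hf : f.IsHomogeneous n) (hn : n ≠ 0) (hzero : ∀ a ∈ pzeroLocus I, eval a.rep f = 0) :
    f ∈ I.radical := by
  rw [← vanishingIdeal_zeroLocus_eq_radical (k := K) (K := K) I, mem_vanishingIdeal_iff]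
  intro v hv
  rw [aeval_eq_eval]
  by_cases hv0 : v = 0
  · simpa [hv0, hn] using eval_smul_of_isHomogeneous hf 0 v
  obtain ⟨t, ht⟩ := Projectivization.exists_smul_eq_mk_rep K v hv0
  rw [Units.smul_def] at ht
  have hmem : Projectivization.mk K v hv0 ∈ pzeroLocus I := by
    intro h hh k
    rw [← ht, eval_smul_of_isHomogeneous (homogeneousComponent_isHomogeneous k h),
      ← aeval_eq_eval, hv _ (hI h hh k), mul_zero]
  have hfv := hzero _ hmem
  rw [← ht, eval_smul_of_isHomogeneous hf] at hfv
  exact (mul_eq_zero.mp hfv).resolve_left (pow_ne_zero n t.ne_zero)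

end HomogeneousIdeals

section LineDivisorIdeals

open Finsupp (single)

variable {K : Type} [Field K] {l j i : Fin 3} {n r : ℕ}

lemma eq_single_add_single (hlj : l ≠ j) (hli : l ≠ i) (hji : j ≠ i) {u : Fin 3 →₀ ℕ}
    (hu : u.degree = n) (hui : u i = 0) : u = single l (n - u j) + single j (u j) := by
  have huniv : (Finset.univ : Finset (Fin 3)) = {l, j, i} :=
    (Finset.eq_univ_of_card _ (Finset.card_eq_three.mpr ⟨l, j, i, hlj, hli, hji, rfl⟩)).symm
  rw [Finsupp.degree_eq_sum, huniv, Finset.sum_insert (by simp [hlj, hli]),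
    Finset.sum_pair hji, hui] at hu
  ext k
  have hk : k ∈ ({l, j, i} : Finset (Fin 3)) := huniv ▸ Finset.mem_univ k
  simp only [Finset.mem_insert, Finset.mem_singleton] at hk
  rcases hk with rfl | rfl | rfl
  · simp [hlj.symm]
    lia
  · simp [hlj]
  · simp [hli, hji, hui]

lemma X_pow_mul_X_pow_eq_monomial {m : ℕ} (l j : Fin (m + 1)) (e k : ℕ) :
    (X l ^ e * X j ^ k : PR K m) = monomial (single l e + single j k) 1 := by
  rw [X_pow_eq_monomial, X_pow_eq_monomial, monomial_mul, one_mul]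

lemma X_pow_mul_X_pow_mem_lineDivisor_iff (hli : l ≠ i) (hlj : l ≠ j) (hji : j ≠ i) {e k : ℕ} :
    (X l ^ e * X j ^ k : PR K 2) ∈ lineDivisor K i j r ↔ r ≤ k := by
  classical
  rw [X_pow_mul_X_pow_eq_monomial, mem_lineDivisor]
  simp [support_monomial, hli, hlj, hji]

lemma mem_lineDivisor_iff_coeff (hlj : l ≠ j) (hli : l ≠ i) (hji : j ≠ i) {f : PR K 2}
    (hf : f.IsHomogeneous n) :
    f ∈ lineDivisor K i j r ↔ ∀ k < r, coeff (single l (n - k) + single j k) f = 0 := by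
  rw [mem_lineDivisor]
  constructor
  · intro h k hk
    by_contra hne
    have := h _ (mem_support_iff.mpr hne)
    simp [hli, hlj, hji] at this
    lia
  · intro h u hu
    by_contra! hur
    have hdeg : u.degree = n := by_contra fun h => mem_support_iff.mp hu (hf.coeff_eq_zero h)
    refine mem_support_iff.mp hu ?_
    rw [eq_single_add_single hlj hli hji hdeg hur.1]
    exact h _ hur.2

lemma sub_coeff_mul_mem_lineDivisor_succ (hlj : l ≠ j) (hli : l ≠ i) (hji : j ≠ i) {f : PR K 2}
    (hf : f.IsHomogeneous n) (hfr : f ∈ lineDivisor K i j r) :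
    f - C (coeff (single l (n - r) + single j r) f) * (X l ^ (n - r) * X j ^ r) ∈
      lineDivisor K i j (r + 1) := by
  classical
  rw [mem_lineDivisor] at hfr ⊢
  intro u hu
  rw [mem_support_iff, X_pow_mul_X_pow_eq_monomial, C_mul_monomial, mul_one, coeff_sub,
    coeff_monomial] at hu
  by_cases huv : single l (n - r) + single j r = u
  · rw [if_pos huv, huv, sub_self] at hu
    exact absurd rfl hu
  rw [if_neg huv, sub_zero] at hu
  refine or_iff_not_imp_left.mpr fun hui => ?_
  have hui : u i = 0 := not_not.mp hui
  have hle := (hfr u (mem_support_iff.mpr hu)).resolve_left (not_not_intro hui)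
  refine Nat.succ_le_of_lt (lt_of_le_of_ne hle fun hr => huv ?_)
  have hdeg : u.degree = n := by_contra fun h => hu (hf.coeff_eq_zero h)
  rw [hr]
  exact (eq_single_add_single hlj hli hji hdeg hui).symm

lemma X_pow_mul_mem_lineDivisor_add {f : PR K 2} (hf : f ∈ lineDivisor K i j r) (k : ℕ) :
    X j ^ k * f ∈ lineDivisor K i j (r + k) := by
  induction k with
  | zero => simpa using hf
  | succ k ih =>
    rw [pow_succ', mul_assoc]
    exact X_mul_mem_lineDivisor_succ ih

lemma exists_X_pow_mul_sub_mem_lineDivisor (hlj : l ≠ j) (hli : l ≠ i) (hji : j ≠ i) {f : PR K 2}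
    (hf : f.IsHomogeneous n) (hfr : f ∉ lineDivisor K i j (r + 1)) :
    ∃ (k e : ℕ) (c : K), c ≠ 0 ∧
      X j ^ k * f - C c * (X l ^ e * X j ^ r) ∈ lineDivisor K i j (r + 1) := by
  classical
  have hex : ∃ s, f ∉ lineDivisor K i j (s + 1) := ⟨r, hfr⟩
  obtain ⟨s, hs, hmin⟩ : ∃ s, f ∉ lineDivisor K i j (s + 1) ∧ f ∈ lineDivisor K i j s := by
    refine ⟨Nat.find hex, Nat.find_spec hex, ?_⟩
    rcases h : Nat.find hex with _ | s
    · simp [mem_lineDivisor]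
    · exact not_not.mp (Nat.find_min hex (by lia))
  have hsr : s ≤ r := by
    by_contra! hrs
    exact hfr (mem_lineDivisor.mpr fun u hu =>
      (mem_lineDivisor.mp hmin u hu).imp_right hrs.trans_le)
  have hsub := sub_coeff_mul_mem_lineDivisor_succ hlj hli hji hf hmin
  refine ⟨r - s, n - s, coeff (single l (n - s) + single j s) f, fun hc => hs ?_, ?_⟩
  · rwa [hc, C_0, zero_mul, sub_zero] at hsub
  · convert X_pow_mul_mem_lineDivisor_add hsub (r - s) using 1
    · rw [show s + 1 + (r - s) = r + 1 by lia]
    · rw [← pow_mul_pow_sub (X j) hsr]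
      ring

lemma isHomogI_lineDivisor (i j : Fin 3) (r : ℕ) : IsHomogI (lineDivisor K i j r) := by
  intro f hf n
  rw [mem_lineDivisor] at hf ⊢
  refine fun u hu => hf u (mem_support_iff.mpr fun h => mem_support_iff.mp hu ?_)
  rw [coeff_homogeneousComponent, h, ite_self]

lemma isSatI_lineDivisor (hlj : l ≠ j) (hli : l ≠ i) (r : ℕ) : IsSatI (lineDivisor K i j r) := by
  intro f hf
  have hl := hf l
  rw [mem_lineDivisor] at hl ⊢
  intro u hu
  have := hl (single l 1 + u) (by rwa [mem_support_iff, coeff_X_mul, ← mem_support_iff])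
  simpa [hli, hlj] using this

lemma X_pow_mul_X_pow_mem_of_not_le (hlj : l ≠ j) (hli : l ≠ i) (hji : j ≠ i)
    {I J : Ideal (PR K 2)} (hI : IsHomogI I) (hsat : IsSatI I)
    (hIJ : lineDivisor K i j (r + 1) ⊓ J ≤ I) {a : ℕ} (ha : X l ^ a ∈ J)
    (hnot : ¬I ≤ lineDivisor K i j (r + 1)) : X l ^ a * X j ^ r ∈ I := by
  obtain ⟨n, f, hf, hfI, hfr⟩ := exists_isHomogeneous_notMem hI hnot
  obtain ⟨k, e, c, hc, hmem⟩ := exists_X_pow_mul_sub_mem_lineDivisor hlj hli hji hf hfr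
  refine mem_of_X_pow_mul_mem hsat (l := l) (e := e) (fun k hk => hIJ ⟨?_, ?_⟩) ?_
  · have huniv : k = l ∨ k = j ∨ k = i := by lia
    rcases huniv with rfl | rfl | rfl
    · exact absurd rfl hk
    · rw [mul_left_comm, ← pow_succ', mul_comm]
      exact X_pow_mul_mem_lineDivisor _
    · exact X_mul_mem_lineDivisor _
  · exact Ideal.mul_mem_left _ _ (Ideal.mul_mem_right _ _ ha)
  · have hlead :
        X l ^ a * (X j ^ k * f) - X l ^ a * (X j ^ k * f - C c * (X l ^ e * X j ^ r)) ∈ I :=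
      Ideal.sub_mem _ (Ideal.mul_mem_left _ _ (Ideal.mul_mem_left _ _ hfI))
        (hIJ ⟨Ideal.mul_mem_left _ _ hmem, Ideal.mul_mem_right _ _ ha⟩)
    convert Ideal.mul_mem_left _ (C c⁻¹) hlead using 1
    have hcc : (C c⁻¹ * C c : PR K 2) = 1 := by rw [← C_mul, inv_mul_cancel₀ hc, C_1]
    linear_combination (-X l ^ e * (X l ^ a * X j ^ r) : PR K 2) * hcc

lemma exists_eq_lineDivisor (hlj : l ≠ j) (hli : l ≠ i) (hji : j ≠ i) {I : Ideal (PR K 2)}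
    (hI : IsHomogI I) (hsat : IsSatI I) (hXi : X i ∈ I) {N : ℕ} (hXj : X j ^ N ∈ I) :
    ∃ r, I = lineDivisor K i j r := by
  classical
  have hex : ∃ r, (X j ^ r : PR K 2) ∈ I := ⟨N, hXj⟩
  refine ⟨Nat.find hex, le_antisymm ?_ (Ideal.span_le.mpr ?_)⟩
  · rcases h : Nat.find hex with _ | r
    · exact fun f _ => by simp [mem_lineDivisor]
    by_contra hnot
    have hle : lineDivisor K i j (r + 1) ⊓ ⊤ ≤ I := by
      rw [inf_top_eq, lineDivisor, Ideal.span_le, Set.pair_subset_iff, ← h]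
      exact ⟨hXi, Nat.find_spec hex⟩
    have hXr := X_pow_mul_X_pow_mem_of_not_le hlj hli hji hI hsat hle
      (a := 0) (l := l) Submodule.mem_top hnot
    rw [pow_zero, one_mul] at hXr
    exact Nat.find_min hex (by lia) hXr
  · exact Set.pair_subset_iff.mpr ⟨hXi, Nat.find_spec hex⟩

end LineDivisorIdeals

section LineDivisorDegree

open Module
open Finsupp (single)

variable {K : Type} [Field K] {l j i : Fin 3} {r : ℕ}

lemma finrank_range_eq_of_ker_eq {V V₁ V₂ : Type} [AddCommGroup V] [Module K V] [AddCommGroup V₁]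
    [Module K V₁] [AddCommGroup V₂] [Module K V₂] {f : V →ₗ[K] V₁} {g : V →ₗ[K] V₂}
    (h : LinearMap.ker f = LinearMap.ker g) :
    finrank K (LinearMap.range f) = finrank K (LinearMap.range g) :=
  (f.quotKerEquivRange.symm ≪≫ₗ Submodule.quotEquivOfEq _ _ h ≪≫ₗ
    g.quotKerEquivRange).finrank_eq

lemma hilbQ_lineDivisor (hlj : l ≠ j) (hli : l ≠ i) (hji : j ≠ i) {t : ℕ} (hrt : r ≤ t) :
    hilbQ (lineDivisor K i j r) t = r := by
  classical
  let coeffs : Hd K 2 t →ₗ[K] (Fin r → K) :=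
    LinearMap.pi fun k => lcoeff K (single l (t - k) + single j (k : ℕ)) ∘ₗ (Hd K 2 t).subtype
  let quot := (Ideal.Quotient.mkₐ K (lineDivisor K i j r)).toLinearMap.domRestrict (Hd K 2 t)
  have hker : LinearMap.ker quot = LinearMap.ker coeffs := by
    ext f
    have hquot : quot f = 0 ↔ (f : PR K 2) ∈ lineDivisor K i j r := Ideal.Quotient.eq_zero_iff_mem
    rw [LinearMap.mem_ker, LinearMap.mem_ker, hquot, mem_lineDivisor_iff_coeff hlj hli hji f.2,
      funext_iff, Fin.forall_iff]
    rfl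
  have hsurj : LinearMap.range coeffs = ⊤ := by
    refine LinearMap.range_eq_top.mpr fun y => ?_
    let f : PR K 2 := ∑ k : Fin r, C (y k) * (X l ^ (t - k) * X j ^ (k : ℕ))
    have hf : f.IsHomogeneous t := IsHomogeneous.sum _ _ _ fun k _ =>
      (isHomogeneous_X_pow_mul_X_pow l j (by lia)).C_mul _
    refine ⟨⟨f, hf⟩, funext fun k => ?_⟩
    have hexp (n : Fin r) :
        single l (t - n) + single j (n : ℕ) = single l (t - k) + single j (k : ℕ) ↔ k = n := by
      refine ⟨fun h => Fin.ext ?_, fun h => by rw [h]⟩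
      simpa [Finsupp.single_eq_of_ne hlj.symm, eq_comm] using DFunLike.congr_fun h j
    change coeff _ f = y k
    simp only [f, coeff_sum, coeff_C_mul, X_pow_mul_X_pow_eq_monomial, coeff_monomial, hexp,
      mul_ite, mul_one, mul_zero, Finset.sum_ite_eq, Finset.mem_univ, if_true]
  rw [hilbQ, ← LinearMap.range_domRestrict, finrank_range_eq_of_ker_eq hker, hsurj, finrank_top,
    finrank_fin_fun]

lemma idealDeg_lineDivisor (hlj : l ≠ j) (hli : l ≠ i) (hji : j ≠ i) (r : ℕ) :
    idealDeg (lineDivisor K i j r) = r := by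
  rw [idealDeg, Filter.limsup_congr ((Filter.eventually_ge_atTop r).mono fun t ht =>
    hilbQ_lineDivisor hlj hli hji ht), Filter.limsup_const]

theorem comap_linSubst_eq_lineDivisor [IsAlgClosed K] (hlj : l ≠ j) (hli : l ≠ i) (hji : j ≠ i)
    {A : PSub K 2} {L : Set (Pm K 2)} (hL : idealOfSet L ≤ A.I) {a : Pm K 2}
    (ha : pzeroLocus A.I = {a}) {g : (Fin 3 → K) ≃ₗ[K] (Fin 3 → K)}
    (hga : g a.rep = Pi.single l 1) (hgL : ∀ p ∈ L, g p.rep i = 0) :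
    A.I.comap (linSubst (m := 2) g) = lineDivisor K i j (idealDeg A.I) := by
  have hX (k : Fin 3) : (linSubst (m := 2) g (X k)).IsHomogeneous 1 :=
    isHomogeneous_linSubst (isHomogeneous_X K k)
  have hXi : X i ∈ A.I.comap (linSubst (m := 2) g) := by
    refine hL (Ideal.subset_span ⟨⟨1, hX i⟩, fun p hp => ?_⟩)
    rw [eval_linSubst, eval_X, hgL p hp]
  obtain ⟨N, hN⟩ : linSubst (m := 2) g (X j) ∈ A.I.radical := by
    refine mem_radical_of_forall_mem_pzeroLocus A.homog (hX j) one_ne_zero fun p hp => ?_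
    rw [ha, Set.mem_singleton_iff] at hp
    rw [eval_linSubst, eval_X, hp, hga, Pi.single_eq_of_ne hlj.symm]
  rw [← map_pow] at hN
  obtain ⟨r, hr⟩ := exists_eq_lineDivisor hlj hli hji (mapSubscheme g A).homog
    (mapSubscheme g A).sat hXi hN
  change A.I.comap (linSubst (m := 2) g) = _ at hr
  rw [← idealDeg_comap_linSubst (m := 2) g, hr, idealDeg_lineDivisor hlj hli hji]

end LineDivisorDegree

section MinimalSpan

variable {K : Type} [Field K] {l j i : Fin 3} {r d : ℕ} {φ : Module.Dual K (Hd K 2 d)}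

lemma apply_X_pow_mul_X_pow_ne_zero (hlj : l ≠ j) (hli : l ≠ i) (hji : j ≠ i) {J : Ideal (PR K 2)}
    (hJ : IsHomogI J) (hsat : IsSatI J) {a : ℕ} (ha : X l ^ a ∈ J) (hd : a + r ≤ d)
    (h : SpansMinimally (lineDivisor K i j (r + 1) ⊓ J) d φ) :
    φ (degreePart d (X l ^ (d - r) * X j ^ r)) ≠ 0 := by
  intro hzero
  have hM : (X l ^ (d - r) * X j ^ r : PR K 2) ∈ J :=
    Ideal.mul_mem_right _ _ (J.pow_mem_of_pow_mem ha (by lia))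
  have hMd : (X l ^ (d - r) * X j ^ r : PR K 2).IsHomogeneous d :=
    isHomogeneous_X_pow_mul_X_pow l j (by lia)
  have hle : lineDivisor K i j (r + 1) ≤ lineDivisor K i j r := fun f hf => by
    rw [mem_lineDivisor] at hf ⊢
    exact fun u hu => (hf u hu).imp_right (Nat.le_of_succ_le ·)
  have hlt : lineDivisor K i j (r + 1) ⊓ J < lineDivisor K i j r ⊓ J := by
    refine lt_of_le_not_ge (inf_le_inf_right J hle) fun hge => ?_
    have hmem := hge ⟨(X_pow_mul_X_pow_mem_lineDivisor_iff hli hlj hji).mpr le_rfl, hM⟩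
    exact absurd ((X_pow_mul_X_pow_mem_lineDivisor_iff hli hlj hji).mp hmem.1) (by lia)
  refine h.2 ⟨_, isHomogI_inf (isHomogI_lineDivisor i j r) hJ,
    isSatI_inf (isSatI_lineDivisor hlj hli r) hsat⟩ hlt fun f hf => ?_
  set c := coeff (Finsupp.single l (d - r) + Finsupp.single j r) (f : PR K 2)
  have hsub : φ (degreePart d ((f : PR K 2) - C c * (X l ^ (d - r) * X j ^ r))) = 0 := by
    rw [degreePart_of_isHomogeneous (f.2.sub (hMd.C_mul c))]
    exact h.1 _ ⟨sub_coeff_mul_mem_lineDivisor_succ hlj hli hji f.2 hf.1,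
      Ideal.sub_mem _ hf.2 (Ideal.mul_mem_left _ _ hM)⟩
  rwa [C_mul', map_sub, map_smul, map_sub, map_smul, hzero, smul_zero, sub_zero,
    degreePart_of_isHomogeneous f.2] at hsub

lemma notMem_schemeSpanSub_of_not_le (hlj : l ≠ j) (hli : l ≠ i) (hji : j ≠ i)
    {J : Ideal (PR K 2)} {a : ℕ} (ha : X l ^ a ∈ J) (hd : a + r ≤ d)
    (hne : φ (degreePart d (X l ^ (d - r) * X j ^ r)) ≠ 0) {A : PSub K 2}
    (hA : lineDivisor K i j (r + 1) ⊓ J ≤ A.I) (hnot : ¬A.I ≤ lineDivisor K i j (r + 1)) :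
    φ ∉ schemeSpanSub A.I d := by
  intro hφ
  have hM : (X l ^ (d - r) * X j ^ r : PR K 2) ∈ A.I := by
    rw [show d - r = d - r - a + a by lia, pow_add, mul_assoc]
    exact Ideal.mul_mem_left _ _
      (X_pow_mul_X_pow_mem_of_not_le hlj hli hji A.homog A.sat hA ha hnot)
  rw [degreePart_of_isHomogeneous (isHomogeneous_X_pow_mul_X_pow l j (by lia))] at hne
  exact hne (hφ _ hM)

lemma X_pow_mem_lineDivisor (i j : Fin 3) (r : ℕ) : (X j ^ r : PR K 2) ∈ lineDivisor K i j r :=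
  Ideal.subset_span (by simp)

lemma X_mem_lineDivisor (i j : Fin 3) (r : ℕ) : (X i : PR K 2) ∈ lineDivisor K i j r :=
  Ideal.subset_span (by simp)

theorem spansMinimally_iff_spansStandardMinimally {w : ℕ} (hw : w ≠ 0) (hd : 2 * w ≤ d) :
    SpansMinimally (lineDivisor K 2 1 w ⊓ lineDivisor K 1 0 w) d φ ↔
      SpansStandardMinimally w d (φ ∘ₗ degreePart d) := by
  obtain ⟨r, rfl⟩ := Nat.exists_eq_succ_of_ne_zero hw
  have hX0 := X_pow_mem_lineDivisor (K := K) 1 0 (r + 1)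
  have hX2 : (X 2 ^ 1 : PR K 2) ∈ lineDivisor K 2 1 (r + 1) := by
    rw [pow_one]
    exact X_mem_lineDivisor 2 1 _
  constructor
  · intro h
    refine ⟨fun f hf hfJ => ?_, ?_, ?_⟩
    · rw [LinearMap.comp_apply, degreePart_of_isHomogeneous hf]
      exact h.1 _ hfJ
    · simpa using apply_X_pow_mul_X_pow_ne_zero (by decide) (by decide) (by decide)
        (isHomogI_lineDivisor 1 0 _) (isSatI_lineDivisor (l := 2) (by decide) (by decide) _)
        hX0 (by lia) h
    · rw [inf_comm] at h
      simpa using apply_X_pow_mul_X_pow_ne_zero (by decide) (by decide) (by decide)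
        (isHomogI_lineDivisor 2 1 _) (isSatI_lineDivisor (l := 0) (by decide) (by decide) _)
        hX2 (by lia) h
  · refine fun h => ⟨fun f hf => ?_, fun A hA hφ => ?_⟩
    · simpa [degreePart_of_isHomogeneous f.2] using h.kills f f.2 hf
    · refine hA.not_ge (le_inf ?_ ?_) <;> by_contra hnot
      · exact notMem_schemeSpanSub_of_not_le (by decide) (by decide) (by decide) hX0 (by lia)
          (by simpa using h.ne_zero_left) hA.le hnot hφ
      · exact notMem_schemeSpanSub_of_not_le (by decide) (by decide) (by decide) hX2 (by lia)
          (by simpa using h.ne_zero_right) (inf_comm (lineDivisor K 2 1 _) _ ▸ hA.le) hnot hφ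

end MinimalSpan

section LineCoefficients

open Finsupp (single)

variable {K : Type} [Field K] {m d n N : ℕ}

lemma dual_ext_monomial {φ χ : Module.Dual K (Hd K m d)}
    (h : ∀ u : Fin (m + 1) →₀ ℕ, u.degree = d →
      φ (degreePart d (monomial u 1)) = χ (degreePart d (monomial u 1))) : φ = χ := by
  ext f
  have hmonomial (u : Fin (m + 1) →₀ ℕ) (hu : u ∈ (f : PR K m).support) :
      φ (degreePart d (monomial u (coeff u f))) = χ (degreePart d (monomial u (coeff u f))) := by
    have hdeg : u.degree = d := by_contra fun h => mem_support_iff.mp hu (f.2.coeff_eq_zero h)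
    rw [← mul_one (coeff u (f : PR K m)), ← smul_eq_mul, ← smul_monomial, map_smul, map_smul,
      map_smul, h u hdeg]
  have hf : f = degreePart d (f : PR K m) := (degreePart_of_isHomogeneous f.2).symm
  rw [hf, (f : PR K m).as_sum, map_sum, map_sum, map_sum]
  exact Finset.sum_congr rfl hmonomial

/-- The functional sending a form of degree `d` to its coefficient at `x_l ^ (d - n) * x_j ^ n`.
These functionals span the span of the Veronese image of the coordinate line through the `l`-th and
`j`-th coordinate points. -/
noncomputable def lineCoeff (l j : Fin (m + 1)) (d n : ℕ) : Module.Dual K (Hd K m d) :=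
  lcoeff K (single l (d - n) + single j n) ∘ₗ (Hd K m d).subtype

lemma lineCoeff_degreePart {l j : Fin (m + 1)} {f : PR K m} (hf : f.IsHomogeneous d) (n : ℕ) :
    lineCoeff l j d n (degreePart d f) = coeff (single l (d - n) + single j n) f := by
  rw [degreePart_of_isHomogeneous hf]
  rfl

variable {l j i : Fin 3}

lemma sum_smul_lineCoeff_monomial (hlj : l ≠ j) (hli : l ≠ i) (hji : j ≠ i) {u : Fin 3 →₀ ℕ}
    (hu : u.degree = d) (c : ℕ → K) (r : ℕ) :
    (∑ n ∈ Finset.range r, c n • lineCoeff l j d n) (degreePart d (monomial u 1)) =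
      if u i = 0 ∧ u j < r then c (u j) else 0 := by
  classical
  have hcoeff (n : ℕ) : lineCoeff l j d n (degreePart d (monomial u (1 : K))) =
      if u i = 0 ∧ u j = n then 1 else 0 := by
    rw [lineCoeff_degreePart (isHomogeneous_monomial _ hu), coeff_monomial]
    refine if_congr ⟨?_, ?_⟩ rfl rfl
    · rintro rfl
      simp [hlj, hli, hji]
    · rintro ⟨hi, rfl⟩
      exact eq_single_add_single hlj hli hji hu hi
  simp only [LinearMap.sum_apply, LinearMap.smul_apply, hcoeff, smul_eq_mul, mul_ite, mul_one,
    mul_zero]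
  by_cases hi : u i = 0 <;> simp [hi]

lemma nu_single_add_smul_single (hlj : l ≠ j) (hli : l ≠ i) (hji : j ≠ i) (t : K) :
    nu d (Pi.single l 1 + t • Pi.single j 1) =
      ∑ n ∈ Finset.range (d + 1), t ^ n • lineCoeff l j d n := by
  refine dual_ext_monomial fun u hu => ?_
  rw [sum_smul_lineCoeff_monomial hlj hli hji hu, nu_degreePart _ (isHomogeneous_monomial _ hu),
    eval_monomial, one_mul, Finsupp.prod_fintype _ _ fun _ => pow_zero _]
  split_ifs with h
  · rw [Finset.prod_eq_single j _ (by simp)]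
    · simp [hlj.symm]
    · intro k _ hkj
      rcases eq_or_ne k l with rfl | hkl
      · simp [hkj]
      · have hki : k = i := by lia
        simp [hki, h.1]
  · have hui : u i ≠ 0 := by
      have := Finsupp.le_degree j u
      lia
    rw [Finset.prod_eq_zero (Finset.mem_univ i)]
    simp [hui, hli.symm, hji.symm]

lemma exists_sum_mul_pow_eq {ζ : K} (hζ : IsPrimitiveRoot ζ N) (hN : N ≠ 0) (c : ℕ → K) :
    ∃ a : Fin N → K, ∀ n, ∑ s, a s * (ζ ^ (s : ℕ)) ^ n = c (n % N) := by
  have hinj : Function.Injective fun s : Fin N => ζ ^ (s : ℕ) :=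
    fun s t h => Fin.ext (hζ.pow_inj s.2 t.2 h)
  have hunit := (Matrix.isUnit_iff_isUnit_det _).mpr
    (Ne.isUnit (Matrix.det_vandermonde_ne_zero_iff.mpr hinj))
  obtain ⟨a, ha⟩ := Matrix.vecMul_surjective_iff_isUnit.mpr hunit fun n : Fin N => c n
  refine ⟨a, fun n => ?_⟩
  have hmod : ζ ^ (n % N) = ζ ^ n := by rw [hζ.eq_orderOf, pow_mod_orderOf]
  have hn := congrFun ha ⟨n % N, Nat.mod_lt n (Nat.pos_of_ne_zero hN)⟩
  simp only [Matrix.vecMul_eq_sum, Finset.sum_apply, Pi.smul_apply, Matrix.vandermonde_apply,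
    smul_eq_mul] at hn
  rw [← hn]
  refine Finset.sum_congr rfl fun s _ => ?_
  rw [pow_right_comm, pow_right_comm _ _ (n % N), hmod]

variable [IsAlgClosed K] [CharZero K]

theorem isPowerSum_sum_smul_lineCoeff (hlj : l ≠ j) (hN : N ≠ 0) (c : ℕ → K) (t : K) :
    IsPowerSum d N
      (∑ n ∈ Finset.range (d + 1), (t ^ n * c (n % N)) • lineCoeff (K := K) (m := 2) l j d n) := by
  obtain ⟨i, hli, hji⟩ := (by decide : ∀ l j : Fin 3, l ≠ j → ∃ i, l ≠ i ∧ j ≠ i) l j hlj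
  have : NeZero (N : K) := ⟨Nat.cast_ne_zero.mpr hN⟩
  obtain ⟨ζ, hζ⟩ := HasEnoughRootsOfUnity.exists_primitiveRoot K N
  obtain ⟨a, ha⟩ := exists_sum_mul_pow_eq hζ hN c
  have hsum := IsPowerSum.sum_smul_nu (d := d) Finset.univ a
    (v := fun s => Pi.single l 1 + (t * ζ ^ (s : ℕ)) • Pi.single j 1) fun s _ h => by
      simpa [hlj] using congrFun h l
  rw [Finset.card_univ, Fintype.card_fin] at hsum
  convert hsum using 1
  simp only [nu_single_add_smul_single hlj hli hji, Finset.smul_sum, smul_smul]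
  rw [Finset.sum_comm]
  refine Finset.sum_congr rfl fun n _ => ?_
  rw [← Finset.sum_smul, ← ha, Finset.mul_sum]
  simp only [mul_pow, mul_left_comm]

-- The curve with coefficients `t ^ (r * (n / r)) * c (n % r)` at the `n`-th place extends the
-- given functional, at `t = 0`, by functionals `t ^ n * b (n % r)` with `r`-periodic `b`.
theorem isBorderPowerSum_sum_smul_lineCoeff (hlj : l ≠ j) {r : ℕ} (hr : r ≠ 0) (hrd : r ≤ d + 1)
    (c : ℕ → K) :
    IsBorderPowerSum d r (∑ n ∈ Finset.range r, c n • lineCoeff (K := K) (m := 2) l j d n) := by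
  have hcurve := IsBorderPowerSum.of_curve (d := d) (r := r) (Finset.range (d + 1))
    (fun n => Polynomial.C (c (n % r)) * Polynomial.X ^ (r * (n / r)))
    (lineCoeff (K := K) (m := 2) l j d) fun t ht => ?_
  · convert hcurve using 1
    refine Finset.sum_subset_zero_on_sdiff (Finset.range_subset_range.mpr hrd) ?_ ?_
    · intro n hn
      have hdiv : n / r ≠ 0 := by
        rw [Nat.div_ne_zero_iff]
        simp only [Finset.mem_sdiff, Finset.mem_range] at hn
        lia
      simp [hr, hdiv]
    · intro n hn
      have hn' := Finset.mem_range.mp hn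
      simp [Nat.div_eq_of_lt hn', Nat.mod_eq_of_lt hn']
  · convert isPowerSum_sum_smul_lineCoeff (d := d) hlj hr (fun k => (t ^ k)⁻¹ * c k) t using 4
      with n
    rw [Polynomial.eval_mul, Polynomial.eval_C, Polynomial.eval_pow, Polynomial.eval_X, mul_comm,
      ← mul_assoc]
    congr 1
    rw [eq_mul_inv_iff_mul_eq₀ (pow_ne_zero _ ht), ← pow_add, Nat.div_add_mod]

end LineCoefficients

section StandardPairRanks

open Finsupp (single)

variable {K : Type} [Field K] {w d : ℕ} {φ : Module.Dual K (Hd K 2 d)}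

lemma monomial_mem_lineDivisor_iff {i j : Fin 3} {r : ℕ} {u : Fin 3 →₀ ℕ} :
    (monomial u 1 : PR K 2) ∈ lineDivisor K i j r ↔ u i ≠ 0 ∨ r ≤ u j := by
  classical
  simp [mem_lineDivisor, support_monomial]

theorem SpansStandardMinimally.two_mul_add_three_le_of_isPowerSum
    (h : SpansStandardMinimally w d (φ ∘ₗ degreePart d)) (hw : 3 ≤ w) (hd : 2 * w ≤ d) {r : ℕ}
    (hφ : IsPowerSum d r φ) : 2 * d + 3 ≤ r + 2 * w := by
  classical
  obtain ⟨T, hTr, hφT⟩ := hφ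
  obtain ⟨c, rfl⟩ := exists_eq_sum_of_mem_dualSpan hφT
  have happly (f : PR K 2) (hf : f.IsHomogeneous d) :
      pointFunctional (T.filter (c · ≠ 0)) c f = (∑ a ∈ T, c a • nu d a.rep) (degreePart d f) := by
    rw [pointFunctional_eq_of_subset (Finset.filter_subset _ T) (by simp +contextual)]
    simp [pointFunctional_apply, nu_degreePart _ hf]
  have hT : SpansStandardMinimally w d (pointFunctional (T.filter (c · ≠ 0)) c) := by
    refine ⟨fun f hf hfJ => (happly f hf).trans (h.kills f hf hfJ), ?_, ?_⟩ <;>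
      rw [happly _ (isHomogeneous_X_pow_mul_X_pow _ _ (by lia))]
    exacts [h.ne_zero_left, h.ne_zero_right]
  have hcard := hT.two_mul_add_three_le_card hw hd fun a ha => (Finset.mem_filter.mp ha).2
  have := Finset.card_filter_le T (c · ≠ 0)
  lia

lemma SpansStandardMinimally.eq_sum_smul_lineCoeff
    (h : SpansStandardMinimally w d (φ ∘ₗ degreePart d)) (hd : 2 * w ≤ d) :
    φ = ∑ n ∈ Finset.range w, φ (degreePart d (X 0 ^ (d - n) * X 1 ^ n)) • lineCoeff 0 1 d n +
      ∑ n ∈ Finset.range w, φ (degreePart d (X 2 ^ (d - n) * X 0 ^ n)) • lineCoeff 2 0 d n := by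
  refine dual_ext_monomial fun u hu => ?_
  rw [LinearMap.add_apply,
    sum_smul_lineCoeff_monomial (i := 2) (by decide) (by decide) (by decide) hu
      fun n => φ (degreePart d (X 0 ^ (d - n) * X 1 ^ n)),
    sum_smul_lineCoeff_monomial (i := 1) (by decide) (by decide) (by decide) hu
      fun n => φ (degreePart d (X 2 ^ (d - n) * X 0 ^ n))]
  simp only [X_pow_mul_X_pow_eq_monomial]
  by_cases hleft : u 2 = 0 ∧ u 1 < w
  · have hu' := eq_single_add_single (l := 0) (j := 1) (i := 2) (by decide) (by decide)
      (by decide) hu hleft.1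
    have hu0 : u 0 = d - u 1 := by simpa using DFunLike.congr_fun hu' 0
    rw [if_pos hleft, if_neg (by lia), add_zero, ← hu']
  by_cases hright : u 1 = 0 ∧ u 0 < w
  · have hu' := eq_single_add_single (l := 2) (j := 0) (i := 1) (by decide) (by decide)
      (by decide) hu hright.1
    rw [if_neg hleft, if_pos hright, zero_add, ← hu']
  · rw [if_neg hleft, if_neg hright, add_zero]
    refine h.kills _ (isHomogeneous_monomial _ hu) ⟨?_, ?_⟩ <;>
      rw [SetLike.mem_coe, monomial_mem_lineDivisor_iff] <;> lia

theorem SpansStandardMinimally.isBorderPowerSum [IsAlgClosed K] [CharZero K]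
    (h : SpansStandardMinimally w d (φ ∘ₗ degreePart d)) (hw : w ≠ 0) (hd : 2 * w ≤ d) :
    IsBorderPowerSum d (2 * w) φ := by
  rw [h.eq_sum_smul_lineCoeff hd, two_mul]
  exact (isBorderPowerSum_sum_smul_lineCoeff (by decide) hw (by lia) _).add
    (isBorderPowerSum_sum_smul_lineCoeff (by decide) hw (by lia) _)

lemma det_ne_zero_of_blockTriangular {ι₁ ι₂ : Type} [Fintype ι₁] [LinearOrder ι₁] [Fintype ι₂]
    [LinearOrder ι₂] {M : Matrix (ι₁ ⊕ ι₂) (ι₁ ⊕ ι₂) K}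
    (hM : ∀ p q, M (.inl p) (.inr q) = 0) (hM₁ : ∀ p q, q < p → M (.inl p) (.inl q) = 0)
    (hM₂ : ∀ p q, q < p → M (.inr p) (.inr q) = 0) (hdiag : ∀ p, M p p ≠ 0) : M.det ≠ 0 := by
  have hblock : M.toBlocks₁₂ = 0 := Matrix.ext hM
  rw [← Matrix.fromBlocks_toBlocks M, hblock, Matrix.det_fromBlocks_zero₁₂,
    Matrix.det_of_isUpperTriangular (M := M.toBlocks₁₁) fun p q => hM₁ p q,
    Matrix.det_of_isUpperTriangular (M := M.toBlocks₂₂) fun p q => hM₂ p q]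
  exact mul_ne_zero (Finset.prod_ne_zero_iff.mpr fun p _ => hdiag (.inl p))
    (Finset.prod_ne_zero_iff.mpr fun p _ => hdiag (.inr p))

/-- Exponents of the degree-`w` monomials `x₀^{w-p} x₁^p` and `x₂^{w-p} x₀^p`, `p < w`, indexing
the rows of a catalecticant minor of size `2w`. -/
noncomputable def minorRow (w : ℕ) : Fin w ⊕ Fin w → Fin 3 →₀ ℕ :=
  Sum.elim (fun p => single 0 (w - p) + single 1 (p : ℕ)) fun p =>
    single 2 (w - p) + single 0 (p : ℕ)

/-- Exponents of the degree-`(d - w)` monomials indexing the columns of the catalecticant minor: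
the `q`-th columns of the two blocks pair with the `q`-th rows to
`x₀^{d+1-w} x₁^{w-1}` and `x₂^{d+1-w} x₀^{w-1}`. -/
noncomputable def minorCol (w d : ℕ) : Fin w ⊕ Fin w → Fin 3 →₀ ℕ :=
  Sum.elim (fun q => single 0 (d - w - (w - 1 - q)) + single 1 (w - 1 - q)) fun q =>
    single 2 (d - w - (w - 1 - q)) + single 0 (w - 1 - q)

lemma degree_minorRow (p : Fin w ⊕ Fin w) : (minorRow w p).degree = w := by
  rcases p with p | p <;>
    simp only [minorRow, Sum.elim_inl, Sum.elim_inr, map_add, Finsupp.degree_single] <;> lia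

lemma degree_minorCol (hd : 2 * w ≤ d) (q : Fin w ⊕ Fin w) : (minorCol w d q).degree = d - w := by
  rcases q with q | q <;>
    simp only [minorCol, Sum.elim_inl, Sum.elim_inr, map_add, Finsupp.degree_single] <;> lia

lemma minorRow_inl_add_minorCol_inl (hd : 2 * w ≤ d) (p : Fin w) :
    minorRow w (.inl p) + minorCol w d (.inl p) = single 0 (d + 1 - w) + single 1 (w - 1) := by
  ext x
  fin_cases x <;> simp [minorRow, minorCol, -Finsupp.single_tsub] <;> lia

lemma minorRow_inr_add_minorCol_inr (hd : 2 * w ≤ d) (p : Fin w) :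
    minorRow w (.inr p) + minorCol w d (.inr p) = single 2 (d + 1 - w) + single 0 (w - 1) := by
  ext x
  fin_cases x <;> simp [minorRow, minorCol, -Finsupp.single_tsub] <;> lia

theorem SpansStandardMinimally.det_minor_ne_zero
    (h : SpansStandardMinimally w d (φ ∘ₗ degreePart d)) (hd : 2 * w ≤ d) :
    (Matrix.of fun p q => φ (degreePart d
      (monomial (minorRow w p) 1 * monomial (minorCol w d q) 1))).det ≠ 0 := by
  have hzero (p q) (hleft : (minorRow w p + minorCol w d q) 2 ≠ 0 ∨
        w ≤ (minorRow w p + minorCol w d q) 1)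
      (hright : (minorRow w p + minorCol w d q) 1 ≠ 0 ∨
        w ≤ (minorRow w p + minorCol w d q) 0) :
      φ (degreePart d (monomial (minorRow w p) 1 * monomial (minorCol w d q) 1)) = 0 := by
    rw [monomial_mul, one_mul]
    refine h.kills _ (isHomogeneous_monomial _ ?_)
      ⟨monomial_mem_lineDivisor_iff.mpr hleft, monomial_mem_lineDivisor_iff.mpr hright⟩
    rw [map_add, degree_minorRow, degree_minorCol hd]
    lia
  have hdiag (p) : φ (degreePart d (monomial (minorRow w p) 1 * monomial (minorCol w d p) 1))
      ≠ 0 := by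
    rw [monomial_mul, one_mul]
    rcases p with p | p
    · rw [minorRow_inl_add_minorCol_inl hd, ← X_pow_mul_X_pow_eq_monomial]
      exact h.ne_zero_left
    · rw [minorRow_inr_add_minorCol_inr hd, ← X_pow_mul_X_pow_eq_monomial]
      exact h.ne_zero_right
  refine det_ne_zero_of_blockTriangular (fun p q => hzero _ _ ?_ ?_)
    (fun p q hqp => hzero _ _ ?_ ?_) (fun p q hqp => hzero _ _ ?_ ?_) hdiag
  all_goals
    simp only [minorRow, minorCol, Sum.elim_inl, Sum.elim_inr, Finsupp.add_apply,
      Finsupp.single_apply, Fin.reduceEq, if_true, if_false]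
    lia

theorem SpansStandardMinimally.two_mul_le_of_isBorderPowerSum
    (h : SpansStandardMinimally w d (φ ∘ₗ degreePart d)) (hd : 2 * w ≤ d) {s : ℕ}
    (hφ : IsBorderPowerSum d s φ) : 2 * w ≤ s := by
  have hcard := hφ.card_le_of_det_ne_zero
    (fun p => isHomogeneous_monomial _ (degree_minorRow p))
    (fun q => isHomogeneous_monomial _ (degree_minorCol hd q)) (by lia) (h.det_minor_ne_zero hd)
  simpa [two_mul] using hcard

theorem isPowerSum_sum_lineCoeff_modEq [IsAlgClosed K] [CharZero K] {l j : Fin 3} (hlj : l ≠ j)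
    {n N : ℕ} (hn : n < N) :
    IsPowerSum d N (∑ k ∈ Finset.range (d + 1) with k ≡ n [MOD N], lineCoeff (K := K) l j d k) := by
  convert isPowerSum_sum_smul_lineCoeff (d := d) hlj (Nat.ne_zero_of_lt hn)
    (fun k => if k = n then 1 else 0) (1 : K) using 1
  simp [Finset.sum_filter, Nat.ModEq, Nat.mod_eq_of_lt hn]

lemma modEq_iff_of_lt_two_mul {n N k : ℕ} (hn : n < N) (hk : k < 2 * N) :
    k ≡ n [MOD N] ↔ k = n ∨ k = n + N := by
  rw [Nat.ModEq, Nat.mod_eq_of_lt hn]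
  rcases lt_or_ge k N with hkN | hkN
  · rw [Nat.mod_eq_of_lt hkN]
    lia
  · rw [Nat.mod_eq_sub_mod hkN, Nat.mod_eq_of_lt (by lia)]
    lia

lemma isPowerSum_lineCoeff [IsAlgClosed K] [CharZero K] {l j : Fin 3} (hlj : l ≠ j) {n : ℕ}
    (hn : 2 * n ≤ d) : IsPowerSum d (d + 1 - n) (lineCoeff (K := K) l j d n) := by
  have hsum := isPowerSum_sum_lineCoeff_modEq (K := K) hlj (d := d) (n := n) (N := d + 1 - n)
    (by lia)
  have hfilter : (Finset.range (d + 1)).filter (· ≡ n [MOD d + 1 - n]) = {n} := by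
    ext k
    simp only [Finset.mem_filter, Finset.mem_range, Finset.mem_singleton]
    have := modEq_iff_of_lt_two_mul (n := n) (N := d + 1 - n) (k := k) (by lia)
    lia
  rwa [hfilter, Finset.sum_singleton] at hsum

lemma isPowerSum_lineCoeff_add_lineCoeff [IsAlgClosed K] [CharZero K] {l j : Fin 3} (hlj : l ≠ j)
    {n : ℕ} (hn : 2 * n < d) :
    IsPowerSum d (d - n) (lineCoeff (K := K) l j d n + lineCoeff l j d d) := by
  have hsum := isPowerSum_sum_lineCoeff_modEq (K := K) hlj (d := d) (n := n) (N := d - n) (by lia)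
  have hfilter : (Finset.range (d + 1)).filter (· ≡ n [MOD d - n]) = {n, d} := by
    ext k
    simp only [Finset.mem_filter, Finset.mem_range, Finset.mem_insert, Finset.mem_singleton]
    have := modEq_iff_of_lt_two_mul (n := n) (N := d - n) (k := k) (by lia)
    lia
  rwa [hfilter, Finset.sum_pair (by lia)] at hsum

lemma lineCoeff_X_pow_mul_X_pow (l j l' j' : Fin 3) {e k : ℕ} (h : e + k = d) (n : ℕ) :
    lineCoeff l j d n (degreePart d (X l' ^ e * X j' ^ k : PR K 2)) =
      if single l' e + single j' k = single l (d - n) + single j n then 1 else 0 := by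
  classical
  rw [lineCoeff_degreePart (isHomogeneous_X_pow_mul_X_pow l' j' h), X_pow_mul_X_pow_eq_monomial,
    coeff_monomial]

theorem exists_spansStandardMinimally_isPowerSum [IsAlgClosed K] [CharZero K] (hw : 2 ≤ w)
    (hd : 2 * w ≤ d) : ∃ ψ : Module.Dual K (Hd K 2 d),
      SpansStandardMinimally w d (ψ ∘ₗ degreePart d) ∧ IsPowerSum d (2 * d + 3 - 2 * w) ψ := by
  have hexp : d + 1 - w + (w - 1) = d := by lia
  refine ⟨lineCoeff 0 1 d (w - 1) + (lineCoeff 2 0 d (w - 1) + lineCoeff 2 0 d d),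
    ⟨fun f hf hfJ => ?_, ?_, ?_⟩, ?_⟩
  · have hleft := (mem_lineDivisor_iff_coeff (l := 0) (by decide) (by decide) (by decide) hf).mp
      hfJ.1
    have hright := (mem_lineDivisor_iff_coeff (l := 2) (by decide) (by decide) (by decide) hf).mp
      hfJ.2
    have hcorner := hleft 0 (by lia)
    simp only [LinearMap.comp_apply, LinearMap.add_apply, lineCoeff_degreePart hf,
      hleft (w - 1) (by lia), hright (w - 1) (by lia)]
    simpa using hcorner
  · simp only [LinearMap.comp_apply, LinearMap.add_apply,
      lineCoeff_X_pow_mul_X_pow _ _ _ _ hexp]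
    rw [if_pos (congrArg₂ _ (congrArg _ (by lia)) rfl), if_neg, if_neg] <;>
      simp [Finsupp.ext_iff, Fin.forall_fin_succ, Finsupp.single_apply] <;> lia
  · simp only [LinearMap.comp_apply, LinearMap.add_apply,
      lineCoeff_X_pow_mul_X_pow _ _ _ _ hexp]
    rw [if_neg, if_pos (congrArg₂ _ (congrArg _ (by lia)) rfl), if_neg] <;>
      simp [Finsupp.ext_iff, Fin.forall_fin_succ, Finsupp.single_apply] <;> lia
  · refine ((isPowerSum_lineCoeff (by decide) (n := w - 1) (by lia)).add
      (isPowerSum_lineCoeff_add_lineCoeff (by decide) (n := w - 1) (by lia))).mono ?_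
    lia

end StandardPairRanks

section LinePairRanks

variable {K : Type} [Field K] {d w : ℕ} {I : Ideal (PR K 2)} {φ : Module.Dual K (Hd K 2 d)}
  {g : (Fin 3 → K) ≃ₗ[K] (Fin 3 → K)}

lemma SpansMinimally.smul (h : SpansMinimally I d φ) {c : K} (hc : c ≠ 0) :
    SpansMinimally I d (c • φ) :=
  ⟨Submodule.smul_mem _ c h.1, fun A' hA' hφ => h.2 A' hA' ((Submodule.smul_mem_iff _ hc).mp hφ)⟩

theorem spansMinimally_iff_of_comap_eq
    (hI : I.comap (linSubst (m := 2) g) = lineDivisor K 2 1 w ⊓ lineDivisor K 1 0 w)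
    (hw : w ≠ 0) (hd : 2 * w ≤ d) :
    SpansMinimally I d φ ↔
      SpansStandardMinimally w d (mapDual (m := 2) g d φ ∘ₗ degreePart d) := by
  rw [← spansMinimally_iff_spansStandardMinimally hw hd, ← hI]
  refine ⟨fun h => h.mapDual g, fun h => ?_⟩
  have hφ := h.mapDual (m := 2) g.symm
  rwa [comap_linSubst_comap_linSubst_symm (m := 2), mapDual_symm_mapDual (m := 2)] at hφ

theorem brank_eq_two_mul [IsAlgClosed K] [CharZero K]
    (hI : I.comap (linSubst (m := 2) g) = lineDivisor K 2 1 w ⊓ lineDivisor K 1 0 w)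
    (hw : w ≠ 0) (hd : 2 * w ≤ d) {P : PN K 2 d} (hP : SpansMinimally I d P.rep) :
    brank d P = 2 * w := by
  have hstd := (spansMinimally_iff_of_comap_eq hI hw hd).mp hP
  refine le_antisymm ?_ ?_
  · exact (brank_le_iff (by lia)).mpr
      ((isBorderPowerSum_mapDual (m := 2) g).mp (hstd.isBorderPowerSum hw hd))
  · by_contra! hlt
    have hborder : IsBorderPowerSum d (2 * w - 1) P.rep :=
      (brank_le_iff (by lia)).mp (Nat.le_sub_one_of_lt hlt)
    have := hstd.two_mul_le_of_isBorderPowerSum hd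
      ((isBorderPowerSum_mapDual (m := 2) g).mpr hborder)
    lia

theorem two_mul_add_three_le_srank_add [Infinite K]
    (hI : I.comap (linSubst (m := 2) g) = lineDivisor K 2 1 w ⊓ lineDivisor K 1 0 w)
    (hw : 3 ≤ w) (hd : 2 * w ≤ d) {P : PN K 2 d} (hP : SpansMinimally I d P.rep) :
    2 * d + 3 ≤ srank d P + 2 * w :=
  ((spansMinimally_iff_of_comap_eq hI (by lia) hd).mp hP).two_mul_add_three_le_of_isPowerSum hw hd
    ((isPowerSum_mapDual (m := 2) g).mpr (srank_le_iff.mp le_rfl))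

theorem exists_spansMinimally_srank_le [IsAlgClosed K] [CharZero K]
    (hI : I.comap (linSubst (m := 2) g) = lineDivisor K 2 1 w ⊓ lineDivisor K 1 0 w)
    (hw : 2 ≤ w) (hd : 2 * w ≤ d) :
    ∃ P : PN K 2 d, SpansMinimally I d P.rep ∧ srank d P ≤ 2 * d + 3 - 2 * w := by
  obtain ⟨ψ, hψ, hψrank⟩ := exists_spansStandardMinimally_isPowerSum (K := K) hw hd
  obtain ⟨φ, rfl⟩ : ∃ φ, mapDual (m := 2) g d φ = ψ :=
    ⟨_, mapDual_mapDual_symm (m := 2) g ψ⟩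
  have hφ := (spansMinimally_iff_of_comap_eq hI (by lia) hd).mpr hψ
  have hφ0 : φ ≠ 0 := by
    rintro rfl
    exact hψ.ne_zero_left (by simp)
  obtain ⟨c, hc⟩ := Projectivization.exists_smul_eq_mk_rep K φ hφ0
  refine ⟨Projectivization.mk K φ hφ0, hc ▸ hφ.smul c.ne_zero, srank_le_iff.mpr ?_⟩
  rw [← hc]
  exact ((isPowerSum_mapDual (m := 2) g).mp hψrank).smul _

end LinePairRanks

end VeroneseRank

open VeroneseRank

theorem stmt8_general (K : Type) [Field K] [IsAlgClosed K] [CharZero K]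
    (w d : ℕ) (hw : 3 ≤ w) (hd : 2 * w ≤ d)
    (L1 L2 : Set (Pm K 2)) (hL1 : IsLine L1) (hL2 : IsLine L2)
    (O : Pm K 2) (hO : L1 ∩ L2 = {O})
    (A1 : PSub K 2) (hA1L : idealOfSet L1 ≤ A1.I)
    (hA1deg : idealDeg A1.I = w) (hA1sup : pzeroLocus A1.I = {O})
    (O2 : Pm K 2) (hO2 : O2 ∈ L2) (hO2O : O2 ≠ O)
    (A2 : PSub K 2) (hA2L : idealOfSet L2 ≤ A2.I)
    (hA2deg : idealDeg A2.I = w) (hA2sup : pzeroLocus A2.I = {O2}) :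
    (∀ P : PN K 2 d, inSpanI (A1.I ⊓ A2.I) d P →
      (∀ A' : PSub K 2, A1.I ⊓ A2.I < A'.I → ¬ inSpanI A'.I d P) →
      brank d P = 2 * w ∧ 2 * d + 3 ≤ srank d P + 2 * w) ∧
    ∃ P : PN K 2 d, inSpanI (A1.I ⊓ A2.I) d P ∧
      (∀ A' : PSub K 2, A1.I ⊓ A2.I < A'.I → ¬ inSpanI A'.I d P) ∧
      srank d P + 2 * w = 2 * d + 3 := by
  obtain ⟨g, hgO, hgO2, hgL1, hgL2⟩ := exists_coordinates hL1 hL2 hO hO2 hO2O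
  have hI : (A1.I ⊓ A2.I).comap (linSubst (m := 2) g) =
      lineDivisor K 2 1 w ⊓ lineDivisor K 1 0 w := by
    rw [Ideal.comap_inf,
      comap_linSubst_eq_lineDivisor (j := 1) (by decide) (by decide) (by decide) hA1L hA1sup hgO
        hgL1,
      comap_linSubst_eq_lineDivisor (j := 0) (by decide) (by decide) (by decide) hA2L hA2sup hgO2
        hgL2, hA1deg, hA2deg]
  refine ⟨fun P hP hmin => ⟨brank_eq_two_mul hI (by lia) hd ⟨hP, hmin⟩,
    two_mul_add_three_le_srank_add hI hw hd ⟨hP, hmin⟩⟩, ?_⟩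
  obtain ⟨P, hP, hrank⟩ := exists_spansMinimally_srank_le hI (by lia) hd
  have hlower := two_mul_add_three_le_srank_add hI hw hd hP
  exact ⟨P, hP.1, hP.2, by lia⟩

/-- Lemma 6 (`o1`): in `ℙ^2`, with `w ≥ 3`, `d ≥ 4w-1`, distinct lines `L₁, L₂` meeting at
`O`, `A₁ ⊂ L₁` the degree-`w` divisor supported at `O`, `A₂ ⊂ L₂` the degree-`w` divisor
supported at `O₂ ∈ L₂ ∖ {O}`, and `A = A₁ ∪ A₂`: every `P ∈ ⟨ν_d(A)⟩` not in the span of any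
proper subscheme has `br(P) = 2w` and `sr(P) ≥ 2d+3-2w`, and such a `P` with
`sr(P) = 2d+3-2w` exists. -/
theorem stmt8 (K : Type) [Field K] [IsAlgClosed K] [CharZero K]
    (w d : ℕ) (hw : 3 ≤ w) (hd : 4 * w ≤ d + 1)
    (L1 L2 : Set (Pm K 2)) (hL1 : IsLine L1) (hL2 : IsLine L2) (hne : L1 ≠ L2)
    (O : Pm K 2) (hO : L1 ∩ L2 = {O})
    (A1 : PSub K 2) (hA1L : idealOfSet L1 ≤ A1.I) (hA1z : IsZeroDimI A1.I)
    (hA1deg : idealDeg A1.I = w) (hA1sup : pzeroLocus A1.I = {O})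
    (O2 : Pm K 2) (hO2 : O2 ∈ L2) (hO2O : O2 ≠ O)
    (A2 : PSub K 2) (hA2L : idealOfSet L2 ≤ A2.I) (hA2z : IsZeroDimI A2.I)
    (hA2deg : idealDeg A2.I = w) (hA2sup : pzeroLocus A2.I = {O2}) :
    (∀ P : PN K 2 d, inSpanI (A1.I ⊓ A2.I) d P →
      (∀ A' : PSub K 2, A1.I ⊓ A2.I < A'.I → ¬ inSpanI A'.I d P) →
      brank d P = 2 * w ∧ 2 * d + 3 ≤ srank d P + 2 * w) ∧
    ∃ P : PN K 2 d, inSpanI (A1.I ⊓ A2.I) d P ∧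
      (∀ A' : PSub K 2, A1.I ⊓ A2.I < A'.I → ¬ inSpanI A'.I d P) ∧
      srank d P + 2 * w = 2 * d + 3 := by
  exact stmt8_general K w d hw (by lia) L1 L2 hL1 hL2 O hO A1 hA1L hA1deg hA1sup O2 hO2 hO2O A2 hA2L
    hA2deg hA2sup
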